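/- arXiv:1510.06700 — 13 statements merged into one kernel-verified Lean document; each statement's English description precedes it below -/
import Mathlib

section
/- Let R ⊆ {0,1}^n be closed under the coordinatewise application of the ternary majority operation maj. If a, b ∈ R lie in the same connected component of the solution graph G(R), then d_R(a,b) = |a − b|, the Hamming distance between a and b (no distance expands in a relation closed under majority). -/
/-- Coordinatewise majority operation on `Bool`. -/
def maj (x y z : Bool) : Bool := (x && y) || (y && z) || (z && x)

/-- One step in the solution graph of `R`: both endpoints are solutions and
they differ in exactly one coordinate. -/
def stepR {ι : Type*} [Fintype ι] [DecidableEq ι] (R : Set (ι → Bool))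
    (a b : ι → Bool) : Prop :=
  a ∈ R ∧ b ∈ R ∧ hammingDist a b = 1

/-- `a` and `b` are connected in the solution graph of `R`. -/
def connIn {ι : Type*} [Fintype ι] [DecidableEq ι] (R : Set (ι → Bool)) :
    (ι → Bool) → (ι → Bool) → Prop :=
  Relation.ReflTransGen (stepR R)

/-- There is a path of length `k` from `a` to `b` in the solution graph of `R`. -/
def hasPathLen {ι : Type*} [Fintype ι] [DecidableEq ι] (R : Set (ι → Bool)) :
    ℕ → (ι → Bool) → (ι → Bool) → Prop
  | 0, a, b => a = b
  | k + 1, a, b => ∃ c, stepR R a c ∧ hasPathLen R k c b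

/-- Shortest-path distance in the solution graph of `R`. -/
noncomputable def distIn {ι : Type*} [Fintype ι] [DecidableEq ι] (R : Set (ι → Bool))
    (a b : ι → Bool) : ℕ :=
  sInf {k | hasPathLen R k a b}

theorem path_lower {n : ℕ} (R : Set (Fin n → Bool)) (b : Fin n → Bool) (k : ℕ) :
    ∀ a, hasPathLen R k a b → hammingDist a b ≤ k := by
  induction k with
  | zero => intro a h; have h' : a = b := h; simp [h']
  | succ k ih =>
    rintro a ⟨c, hs, hp⟩
    have h1 := ih c hp
    have h2 := hammingDist_triangle a c b
    have h3 := hs.2.2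
    omega

theorem dist_between {n : ℕ} (a b c : Fin n → Bool) (h : ∀ i, a i = b i → c i = a i) :
    hammingDist a b = hammingDist a c + hammingDist c b := by
  unfold hammingDist
  rw [← Finset.card_union_of_disjoint]
  · congr 1
    ext i
    have := h i
    simp only [Finset.mem_filter, Finset.mem_union, Finset.mem_univ, true_and]
    revert this
    cases a i <;> cases b i <;> cases c i <;> simp
  · rw [Finset.disjoint_left]
    intro i
    have := h i
    simp only [Finset.mem_filter, Finset.mem_univ, true_and]
    revert this
    cases a i <;> cases b i <;> cases c i <;> simp

theorem maj_lift {n : ℕ} (R : Set (Fin n → Bool))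
    (hmaj : ∀ a ∈ R, ∀ b ∈ R, ∀ c ∈ R, (fun i => maj (a i) (b i) (c i)) ∈ R)
    (a b : Fin n → Bool) (ha : a ∈ R) (hb : b ∈ R) (hconn : connIn R a b) :
    Relation.ReflTransGen (fun x y => stepR R x y ∧ ∀ i, a i = b i → y i = a i) a b := by
  have key := Relation.ReflTransGen.lift'
    (p := fun x y => stepR R x y ∧ ∀ i, a i = b i → y i = a i)
    (fun u : Fin n → Bool => (fun i => maj (a i) (u i) (b i))) (fun u v huv => by
      obtain ⟨hu, hv, hd⟩ := huv
      have hle : hammingDist (fun i => maj (a i) (u i) (b i)) (fun i => maj (a i) (v i) (b i))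
          ≤ hammingDist u v := by
        unfold hammingDist
        apply Finset.card_le_card
        intro i
        simp only [Finset.mem_filter, Finset.mem_univ, true_and]
        intro h h'
        exact h (by rw [h'])
      rw [hd] at hle
      rcases Nat.le_one_iff_eq_zero_or_eq_one.mp hle with h0 | h1
      · have h0' := hammingDist_eq_zero.mp h0
        show Relation.ReflTransGen _ (fun i => maj (a i) (u i) (b i))
          (fun i => maj (a i) (v i) (b i))
        rw [h0']
      · refine Relation.ReflTransGen.single ⟨⟨hmaj a ha u hu b hb, hmaj a ha v hv b hb, h1⟩, ?_⟩
        intro i hi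
        show maj (a i) (v i) (b i) = a i
        rw [← hi]
        cases a i <;> cases v i <;> rfl) a b hconn
  have e1 : (fun i => maj (a i) (a i) (b i)) = a := by
    funext i; cases a i <;> cases b i <;> rfl
  have e2 : (fun i => maj (a i) (b i) (b i)) = b := by
    funext i; cases a i <;> cases b i <;> rfl
  simpa only [Function.onFun, e1, e2] using key

theorem path_upper {n : ℕ} (R : Set (Fin n → Bool))
    (hmaj : ∀ a ∈ R, ∀ b ∈ R, ∀ c ∈ R, (fun i => maj (a i) (b i) (c i)) ∈ R)
    (b : Fin n → Bool) (hb : b ∈ R) (k : ℕ) :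
    ∀ a ∈ R, connIn R a b → hammingDist a b = k → hasPathLen R k a b := by
  induction k with
  | zero => intro a _ _ h; exact hammingDist_eq_zero.mp h
  | succ k ih =>
    intro a ha hc hd
    rcases (maj_lift R hmaj a b ha hb hc).cases_head with h | ⟨c, ⟨hs, hbt⟩, hcb⟩
    · subst h; simp at hd
    · have h1 := dist_between a b c hbt
      have h2 := hs.2.2
      exact ⟨c, hs, ih c hs.2.1 (Relation.ReflTransGen.lift (p := stepR R) id (fun _ _ h => h.1) c b hcb) (by omega)⟩


/-- If `R ⊆ {0,1}^n` is closed under coordinatewise majority, then no distance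
expands: for `a, b ∈ R` in the same connected component of `G(R)`,
`d_R(a,b)` equals the Hamming distance `|a - b|`. -/
theorem stmt0 {n : ℕ} (R : Set (Fin n → Bool))
    (hmaj : ∀ a ∈ R, ∀ b ∈ R, ∀ c ∈ R, (fun i => maj (a i) (b i) (c i)) ∈ R)
    (a b : Fin n → Bool) (ha : a ∈ R) (hb : b ∈ R)
    (hconn : connIn R a b) :
    distIn R a b = hammingDist a b := by
  have hmem := path_upper R hmaj b hb _ a ha hconn rfl
  apply le_antisymm
  · exact Nat.sInf_le hmem
  · exact path_lower R b _ a (Nat.sInf_mem (s := {k | hasPathLen R k a b}) ⟨_, hmem⟩)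
end

section
/- Let F ⊆ {0,1}^n be defined by a constraint family ((V_j, Q_j))_{j∈J} in which every constraint relation Q_j is componentwise bijunctive, i.e. every connected component of the solution graph G(Q_j) is closed under the coordinatewise application of the ternary majority operation maj. If a, b ∈ F lie in the same connected component of the solution graph G(F), then d_F(a,b) = |a − b|, the Hamming distance between a and b. -/
/-- The relation on `{0,1}^n` defined by a constraint family `((V j, Q j))_j`:
all restrictions to the constraint scopes must satisfy the constraints. -/
def famSet {n : ℕ} {J : Type*} (V : J → Finset (Fin n))
    (Q : ∀ j, Set ({i // i ∈ V j} → Bool)) : Set (Fin n → Bool) :=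
  {a | ∀ j, (fun i : {i // i ∈ V j} => a i.1) ∈ Q j}

lemma maj_hamming {ι : Type*} [Fintype ι] [DecidableEq ι] (a v b : ι → Bool) :
    hammingDist a (fun i => maj (a i) (v i) (b i)) +
      hammingDist (fun i => maj (a i) (v i) (b i)) b = hammingDist a b := by
  simp only [hammingDist, Finset.card_filter, ← Finset.sum_add_distrib]
  refine Finset.sum_congr rfl fun i _ => ?_
  generalize a i = x; generalize v i = y; generalize b i = z
  revert x y z; decide

lemma maj_lip {ι : Type*} [Fintype ι] [DecidableEq ι] (a u v b : ι → Bool) :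
    hammingDist (fun i => maj (a i) (u i) (b i)) (fun i => maj (a i) (v i) (b i))
      ≤ hammingDist u v := by
  refine Finset.card_le_card fun i hi => ?_
  simp only [Finset.mem_filter, Finset.mem_univ, true_and] at hi ⊢
  intro h; apply hi; rw [h]

lemma hasPathLen_lower {ι : Type*} [Fintype ι] [DecidableEq ι] (R : Set (ι → Bool))
    (b : ι → Bool) (k : ℕ) : ∀ a, hasPathLen R k a b → hammingDist a b ≤ k := by
  induction k with
  | zero => intro a h; simp only [hasPathLen] at h; simp [h]
  | succ k ih =>
    rintro a ⟨c, ⟨_, _, h1⟩, h2⟩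
    have := ih c h2
    have := hammingDist_triangle a c b
    omega

lemma connIn_symm {ι : Type*} [Fintype ι] [DecidableEq ι] {R : Set (ι → Bool)}
    {a b : ι → Bool} (h : connIn R a b) : connIn R b a := by
  induction h with
  | refl => exact Relation.ReflTransGen.refl
  | tail _ h ih =>
    obtain ⟨h1, h2, h3⟩ := h
    exact Relation.ReflTransGen.head ⟨h2, h1, by rw [hammingDist_comm]; exact h3⟩ ih

lemma connIn_restrict {n : ℕ} {J : Type*} (V : J → Finset (Fin n))
    (Q : ∀ j, Set ({i // i ∈ V j} → Bool)) (j : J) {a b : Fin n → Bool}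
    (h : connIn (famSet V Q) a b) :
    connIn (Q j) (fun i => a i.1) (fun i => b i.1) := by
  induction h with
  | refl => exact Relation.ReflTransGen.refl
  | @tail u v _ h ih =>
    obtain ⟨hu, hv, h1⟩ := h
    by_cases he : (fun i : {i // i ∈ V j} => u i.1) = (fun i => v i.1)
    · rw [← he]; exact ih
    · refine Relation.ReflTransGen.tail ih ⟨hu j, hv j, ?_⟩
      have hp := hammingDist_pos.2 he
      have hle : hammingDist (fun i : {i // i ∈ V j} => u i.1) (fun i => v i.1)
          ≤ hammingDist u v := by
        refine Finset.card_le_card_of_injOn (fun i => i.1) ?_ ?_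
        · intro i hi
          simpa using hi
        · intro x _ y _ hxy
          exact Subtype.ext hxy
      omega

/-- If every constraint relation is componentwise bijunctive (every connected
component of its solution graph is closed under coordinatewise majority), then
in the solution graph of the defined relation no distance expands. -/
theorem stmt1 {n : ℕ} {J : Type*} [Fintype J]
    (V : J → Finset (Fin n)) (Q : ∀ j, Set ({i // i ∈ V j} → Bool))
    (hQ : ∀ j, ∀ a ∈ Q j, ∀ b ∈ Q j, ∀ c ∈ Q j,
      connIn (Q j) a b → connIn (Q j) a c →
        (fun i => maj (a i) (b i) (c i)) ∈ Q j ∧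
          connIn (Q j) a (fun i => maj (a i) (b i) (c i)))
    (a b : Fin n → Bool) (ha : a ∈ famSet V Q) (hb : b ∈ famSet V Q)
    (hconn : connIn (famSet V Q) a b) :
    distIn (famSet V Q) a b = hammingDist a b := by
  classical
  have key : ∀ a ∈ famSet V Q, connIn (famSet V Q) a b → a ≠ b →
      ∃ c, stepR (famSet V Q) a c ∧ hammingDist c b + 1 = hammingDist a b := by
    intro a ha hab hne
    have hmem : ∀ v, v ∈ famSet V Q → connIn (famSet V Q) a v →
        (fun i => maj (a i) (v i) (b i)) ∈ famSet V Q := fun v hv h j =>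
      (hQ j _ (ha j) _ (hv j) _ (hb j) (connIn_restrict V Q j h)
        (connIn_restrict V Q j hab)).1
    have main : ∀ v, connIn (famSet V Q) a v →
        (fun i => maj (a i) (v i) (b i)) = a ∨
        ∃ c, stepR (famSet V Q) a c ∧ hammingDist c b + 1 = hammingDist a b := by
      intro v h
      induction h with
      | refl =>
        left; funext i
        cases a i <;> cases b i <;> rfl
      | @tail u v hu h ih =>
        rcases ih with ih | ih
        · by_cases he : (fun i => maj (a i) (v i) (b i)) = a
          · exact Or.inl he
          · right
            have hl := maj_lip a u v b
            rw [ih, h.2.2] at hl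
            have hp := hammingDist_pos.2 (Ne.symm he)
            have hs := maj_hamming a v b
            exact ⟨_, ⟨ha, hmem v h.2.1 (Relation.ReflTransGen.tail hu h), by omega⟩, by omega⟩
        · exact Or.inr ih
    rcases main b hab with h | h
    · exfalso; apply hne; rw [← h]; funext i
      cases a i <;> cases b i <;> rfl
    · exact h
  have path : ∀ k a, a ∈ famSet V Q → connIn (famSet V Q) a b → hammingDist a b = k →
      hasPathLen (famSet V Q) k a b := by
    intro k
    induction k with
    | zero => intro a _ _ h; exact hammingDist_eq_zero.1 h
    | succ k ih =>
      intro a ha hab hk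
      have hne : a ≠ b := by rintro rfl; simp at hk
      obtain ⟨c, hc, hd⟩ := key a ha hab hne
      exact ⟨c, hc, ih c hc.2.1
        (Relation.ReflTransGen.trans (connIn_symm (Relation.ReflTransGen.single hc)) hab)
        (by omega)⟩
  have hp := path _ a ha hconn rfl
  exact le_antisymm (Nat.sInf_le hp)
    (le_csInf ⟨_, hp⟩ fun k hk => hasPathLen_lower _ b k a hk)
end

section
/- Let F ⊆ {0,1}^n be defined by a constraint family ((V_j, Q_j))_{j∈J} in which every constraint relation Q_j is OR-free. Then every connected component C of the solution graph G(F) contains a minimum solution m, i.e. m ∈ C and m ≤ a coordinatewise for every a ∈ C; moreover, every a ∈ C is connected to m via a monotone path, i.e. there is a path m = u⁰, u¹, …, uʳ = a in G(F) with u⁰ ≤ u¹ ≤ ⋯ ≤ uʳ. -/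
/-- `Q` is OR-free: the binary relation OR = {01, 10, 11} cannot be obtained
from `Q` by substituting constants at all remaining coordinates. -/
def orFree {ι : Type*} [DecidableEq ι] (Q : Set (ι → Bool)) : Prop :=
  ¬ ∃ (i j : ι) (t : ι → Bool), i ≠ j ∧
      ∀ x y : Bool,
        (Function.update (Function.update t i x) j y ∈ Q ↔ (x || y) = true)

/-- Connectivity via a monotone (coordinatewise increasing) path. -/
def monoConn {ι : Type*} [Fintype ι] [DecidableEq ι] (R : Set (ι → Bool)) :
    (ι → Bool) → (ι → Bool) → Prop :=
  Relation.ReflTransGen (fun x y => stepR R x y ∧ x ≤ y)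

/-- A downward step in the solution graph. -/
def downStep {n : ℕ} (R : Set (Fin n → Bool)) (x y : Fin n → Bool) : Prop :=
  stepR R y x ∧ y ≤ x

theorem stepR_symm {n : ℕ} {R : Set (Fin n → Bool)} {x y : Fin n → Bool}
    (h : stepR R x y) : stepR R y x :=
  ⟨h.2.1, h.1, by rw [hammingDist_comm]; exact h.2.2⟩

theorem stepR_exists {n : ℕ} {R : Set (Fin n → Bool)} {x y : Fin n → Bool}
    (h : stepR R x y) : ∃ i, y = Function.update x i (!x i) := by
  obtain ⟨-, -, h⟩ := h
  unfold hammingDist at h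
  obtain ⟨i, hi⟩ := Finset.card_eq_one.1 h
  refine ⟨i, ?_⟩
  have key : ∀ k, x k ≠ y k ↔ k = i := by
    intro k
    have := Finset.ext_iff.1 hi k
    simpa using this
  funext k
  by_cases hk : k = i
  · subst hk
    have := (key k).2 rfl
    simp only [Function.update_self]
    cases hx : x k <;> cases hy : y k <;> simp_all
  · rw [Function.update_of_ne hk]
    by_contra hne
    exact hk ((key k).1 (Ne.symm hne))

theorem hamming_update {n : ℕ} (x : Fin n → Bool) (i : Fin n) (b : Bool) (hb : x i ≠ b) :
    hammingDist (Function.update x i b) x = 1 := by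
  unfold hammingDist
  rw [Finset.card_eq_one]
  refine ⟨i, ?_⟩
  ext k
  by_cases hk : k = i
  · subst hk; simpa using Ne.symm hb
  · simp [hk]

theorem stepR_comparable {n : ℕ} {R : Set (Fin n → Bool)} {x y : Fin n → Bool}
    (h : stepR R x y) : x ≤ y ∨ y ≤ x := by
  obtain ⟨i, rfl⟩ := stepR_exists h
  cases hx : x i
  · left
    rw [le_update_iff]
    simp [hx]
  · right
    rw [update_le_iff]
    simp [hx]

theorem downStep_iff {n : ℕ} {R : Set (Fin n → Bool)} {x y : Fin n → Bool} :
    downStep R x y ↔ x ∈ R ∧ y ∈ R ∧ ∃ i, x i = true ∧ y = Function.update x i false := by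
  constructor
  · rintro ⟨h, hle⟩
    refine ⟨h.2.1, h.1, ?_⟩
    obtain ⟨i, hi⟩ := stepR_exists (stepR_symm h)
    cases hx : x i
    · exfalso
      have := hle i
      rw [hi] at this
      simp only [Function.update_self, hx] at this
      have h2 : (true : Bool) ≤ false := this
      revert h2
      decide
    · exact ⟨i, hx, by rw [hi, hx]; rfl⟩
  · rintro ⟨hx, hy, i, hi, rfl⟩
    refine ⟨⟨hy, hx, hamming_update _ _ _ (by simp [hi])⟩, ?_⟩
    rw [update_le_iff]
    simp

theorem famSet_orFree {n : ℕ} {J : Type*}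
    (V : J → Finset (Fin n)) (Q : ∀ j, Set ({i // i ∈ V j} → Bool))
    (hQ : ∀ j, orFree (Q j)) : orFree (famSet V Q) := by
  rintro ⟨i, k, t, hik, h⟩
  have h00 : Function.update (Function.update t i false) k false ∉ famSet V Q := by
    rw [h]; simp
  have h10 := (h true false).2 rfl
  have h01 := (h false true).2 rfl
  have h11 := (h true true).2 rfl
  simp only [famSet, Set.mem_ofPred_eq, not_forall] at h00
  obtain ⟨j, hj⟩ := h00
  by_cases hi : i ∈ V j
  · by_cases hk : k ∈ V j
    · apply hQ j
      refine ⟨⟨i, hi⟩, ⟨k, hk⟩, fun l => t l.1, by simpa using hik, ?_⟩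
      have e : ∀ x y : Bool,
          Function.update (Function.update (fun l : {l // l ∈ V j} => t l.1) ⟨i, hi⟩ x) ⟨k, hk⟩ y
          = fun l : {l // l ∈ V j} => Function.update (Function.update t i x) k y l.1 := by
        intro x y
        funext l
        simp only [Function.update_apply, Subtype.ext_iff]
      intro x y
      rw [e]
      cases x <;> cases y
      · simpa using hj
      · simpa using h01 j
      · simpa using h10 j
      · simpa using h11 j
    · apply hj
      convert h01 j using 1
      funext l
      have : l.1 ≠ k := fun e => hk (e ▸ l.2)
      simp [this]
  · apply hj
    convert h10 j using 1
    funext l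
    have : l.1 ≠ i := fun e => hi (e ▸ l.2)
    simp [Function.update_apply, this]

theorem downStep_diamond {n : ℕ} {R : Set (Fin n → Bool)} (hR : orFree R)
    (x y z : Fin n → Bool) (hxy : downStep R x y) (hxz : downStep R x z) :
    ∃ d, Relation.ReflGen (downStep R) y d ∧ Relation.ReflTransGen (downStep R) z d := by
  obtain ⟨hx, hy, i, hi, rfl⟩ := downStep_iff.1 hxy
  obtain ⟨-, hz, k, hk, rfl⟩ := downStep_iff.1 hxz
  by_cases hik : i = k
  · subst hik
    exact ⟨_, .refl, .refl⟩
  have hd : Function.update (Function.update x i false) k false ∈ R := by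
    by_contra hd
    apply hR
    refine ⟨i, k, x, hik, ?_⟩
    have e1 : Function.update x i true = x := by rw [← hi]; simp
    have e2 : Function.update x k true = x := by rw [← hk]; simp
    intro a b
    cases a <;> cases b
    · simpa using hd
    · rw [Function.update_comm hik, e2]; simpa using hy
    · rw [e1]; simpa using hz
    · rw [e1, e2]; simpa using hx
  refine ⟨_, .single (downStep_iff.2 ⟨hy, hd, k, ?_, rfl⟩),
    .single (downStep_iff.2 ⟨hz, hd, i, ?_, ?_⟩)⟩
  · rw [Function.update_of_ne (Ne.symm hik)]; exact hk
  · rw [Function.update_of_ne hik]; exact hi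
  · rw [Function.update_comm hik]

theorem monoConn_iff {n : ℕ} {R : Set (Fin n → Bool)} {x y : Fin n → Bool} :
    monoConn R x y ↔ Relation.ReflTransGen (downStep R) y x := by
  rw [← Relation.reflTransGen_swap]
  rfl

theorem downStar_le {n : ℕ} {R : Set (Fin n → Bool)} {x y : Fin n → Bool}
    (h : Relation.ReflTransGen (downStep R) x y) : y ≤ x := by
  induction h with
  | refl => exact le_rfl
  | tail _ h ih => exact h.2.trans ih

/-- If every constraint relation is OR-free, every connected component of the
solution graph of the defined relation contains a coordinatewise minimum
solution, and every solution of the component is connected to it via a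
monotone path. -/
theorem stmt2 {n : ℕ} {J : Type*} [Fintype J]
    (V : J → Finset (Fin n)) (Q : ∀ j, Set ({i // i ∈ V j} → Bool))
    (hQ : ∀ j, orFree (Q j)) :
    ∀ a ∈ famSet V Q, ∃ m, m ∈ famSet V Q ∧ connIn (famSet V Q) m a ∧
      (∀ b ∈ famSet V Q, connIn (famSet V Q) a b → m ≤ b) ∧
      (∀ b ∈ famSet V Q, connIn (famSet V Q) a b → monoConn (famSet V Q) m b) := by
  intro a ha
  have hR := famSet_orFree V Q hQ
  generalize famSet V Q = R at *
  obtain ⟨m, hm⟩ := (Set.toFinite {x | Relation.ReflTransGen (downStep R) a x}).exists_minimal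
    ⟨a, Relation.ReflTransGen.refl⟩
  have ham : Relation.ReflTransGen (downStep R) a m := hm.prop
  have hnf : ∀ d, Relation.ReflTransGen (downStep R) m d → d = m := by
    intro d hd
    exact le_antisymm (downStar_le hd) (hm.le_of_le (ham.trans hd) (downStar_le hd))
  have hmono : ∀ b, connIn R a b → Relation.ReflTransGen (downStep R) b m := by
    intro b hb
    induction hb with
    | refl => exact ham
    | tail _ h ih =>
      rcases stepR_comparable h with hle | hle
      · exact Relation.ReflTransGen.head ⟨h, hle⟩ ih
      · obtain ⟨d, hd1, hd2⟩ := Relation.church_rosser (downStep_diamond hR) ih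
          (Relation.ReflTransGen.single ⟨stepR_symm h, hle⟩)
        rw [hnf d hd1] at hd2
        exact hd2
  refine ⟨m, ?_, ?_, fun b _ hb => downStar_le (hmono b hb),
    fun b _ hb => monoConn_iff.2 (hmono b hb)⟩
  · rcases Relation.ReflTransGen.cases_tail ham with h | ⟨c, _, h⟩
    · rw [h]; exact ha
    · exact h.1.1
  · have h1 : monoConn R m a := monoConn_iff.2 ham
    unfold monoConn at h1
    unfold connIn
    clear hmono hnf hm ham ha
    induction h1 with
    | refl => exact .refl
    | tail _ h ih => exact ih.tail h.1
end

section
/- Let R ⊆ {0,1}^n be closed under coordinatewise conjunction ∧ and contain the all-zero vector (the solution set of a Horn formula without positive unit clauses). Then the solution graph G(R) is disconnected if and only if R contains a locally minimal nonzero solution, i.e. some a ∈ R with a ≠ (0,…,0) such that for every coordinate i with a_i = 1, the vector obtained from a by flipping coordinate i to 0 is not in R. -/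
theorem stepR_symm_aux {n : ℕ} (R : Set (Fin n → Bool)) (a b : Fin n → Bool)
    (h : stepR R a b) : stepR R b a :=
  ⟨h.2.1, h.1, by rw [hammingDist_comm]; exact h.2.2⟩

theorem hamming_one_aux {n : ℕ} (a b : Fin n → Bool) (h : hammingDist a b = 1) :
    ∃ i, ∀ j, j ≠ i → a j = b j := by
  unfold hammingDist at h
  obtain ⟨i, hi⟩ := Finset.card_eq_one.mp h
  refine ⟨i, fun j hj => ?_⟩
  by_contra hne
  have : j ∈ ({i} : Finset (Fin n)) := by
    rw [← hi]; simp [hne]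
  exact hj (Finset.mem_singleton.mp this)

theorem hamming_update_aux {n : ℕ} (a : Fin n → Bool) (i : Fin n) (h : a i = true) :
    hammingDist a (Function.update a i false) = 1 := by
  unfold hammingDist
  apply Finset.card_eq_one.mpr
  refine ⟨i, ?_⟩
  ext j
  by_cases hj : j = i
  · subst hj; simp [h]
  · simp [hj]

theorem conn_zero_aux {n : ℕ} (R : Set (Fin n → Bool))
    (hmin : ∀ a ∈ R, a ≠ (fun _ => false) →
      ∃ i, a i = true ∧ Function.update a i false ∈ R) :
    ∀ (k : ℕ) (a : Fin n → Bool), a ∈ R → (Finset.univ.filter (fun i => a i = true)).card = k →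
      connIn R a (fun _ => false) := by
  intro k
  induction k with
  | zero =>
    intro a _ hk
    have : a = fun _ => false := by
      funext i
      have := Finset.filter_eq_empty_iff.mp (Finset.card_eq_zero.mp hk) (Finset.mem_univ i)
      simpa using this
    rw [this]
    exact Relation.ReflTransGen.refl
  | succ k ih =>
    intro a ha hk
    by_cases hz : a = fun _ => false
    · rw [hz]; exact Relation.ReflTransGen.refl
    obtain ⟨i, hi, hu⟩ := hmin a ha hz
    refine Relation.ReflTransGen.head ⟨ha, hu, hamming_update_aux a i hi⟩ (ih _ hu ?_)
    have he : Finset.univ.filter (fun j => Function.update a i false j = true)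
        = (Finset.univ.filter (fun j => a j = true)).erase i := by
      ext j
      by_cases hj : j = i
      · subst hj; simp
      · simp [hj]
    rw [he, Finset.card_erase_of_mem (by simp [hi]), hk]
    rfl

/-- For `R` closed under coordinatewise conjunction and containing the
all-zero vector (a Horn relation without positive unit clauses), the solution
graph `G(R)` is disconnected iff `R` has a locally minimal nonzero solution. -/
theorem stmt4 {n : ℕ} (R : Set (Fin n → Bool))
    (hand : ∀ a ∈ R, ∀ b ∈ R, (fun i => a i && b i) ∈ R)
    (h0 : (fun _ => false) ∈ R) :
    (∃ a ∈ R, ∃ b ∈ R, ¬ connIn R a b) ↔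
      (∃ a ∈ R, a ≠ (fun _ => false) ∧
        ∀ i, a i = true → Function.update a i false ∉ R) := by
  constructor
  · rintro ⟨a, ha, b, hb, hab⟩
    by_contra hno
    have hmin : ∀ a ∈ R, a ≠ (fun _ => false) →
        ∃ i, a i = true ∧ Function.update a i false ∈ R := by
      intro a ha hz
      by_contra hc
      exact hno ⟨a, ha, hz, fun i hi hu => hc ⟨i, hi, hu⟩⟩
    have h1 := conn_zero_aux R hmin _ a ha rfl
    have h2 := conn_zero_aux R hmin _ b hb rfl
    have hs : Std.Symm (stepR R) := ⟨fun x y h => stepR_symm_aux R x y h⟩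
    exact hab (Relation.ReflTransGen.trans h1 (Std.Symm.symm (r := Relation.ReflTransGen (stepR R)) _ _ h2))
  · rintro ⟨a, ha, hz, hm⟩
    refine ⟨a, ha, _, h0, fun hc => hz ?_⟩
    have key : ∀ b, connIn R a b → ∀ j, a j = true → b j = true := by
      intro b hb
      induction hb with
      | refl => exact fun _ h => h
      | @tail b c _ hbc ih =>
        obtain ⟨i, hi⟩ := hamming_one_aux b c hbc.2.2
        intro j hj
        by_contra hcj
        have hji : j = i := by
          by_contra hne
          exact hcj ((hi j hne) ▸ ih j hj)
        subst hji
        apply hm j hj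
        have he : Function.update a j false = fun l => a l && c l := by
          funext l
          by_cases hl : l = j
          · subst hl; simp [Bool.eq_false_iff.mpr hcj]
          · have h3 := hi l hl
            have h4 := ih l
            rw [Function.update_of_ne hl, ← h3]
            cases hal : a l
            · rfl
            · simp [h4 hal]
        rw [he]
        exact hand a ha c hbc.2.1
    funext i
    have := key _ hc i
    simpa using this
end

section
/- Let R ⊆ {0,1}^n be closed under coordinatewise conjunction ∧. Let u and v be elements of two distinct connected components of the solution graph G(R), each of which is the minimum of its component with respect to the coordinatewise order (u ≤ a for every a in the component of u, and v ≤ b for every b in the component of v). If u ≤ v coordinatewise and u ≠ v, then no vector a in the connected component of u satisfies v ≤ a. -/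
/-- Let `R` be closed under coordinatewise conjunction, and let `u`, `v` be
the coordinatewise minimum solutions of two distinct connected components of
`G(R)`. If `u ≤ v` and `u ≠ v`, then no vector in the component of `u`
dominates `v`. -/
theorem stmt5 {n : ℕ} (R : Set (Fin n → Bool))
    (hand : ∀ a ∈ R, ∀ b ∈ R, (fun i => a i && b i) ∈ R)
    (u v : Fin n → Bool) (hu : u ∈ R) (hv : v ∈ R)
    (hdistinct : ¬ connIn R u v)
    (humin : ∀ a ∈ R, connIn R u a → u ≤ a)
    (hvmin : ∀ b ∈ R, connIn R v b → v ≤ b)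
    (huv : u ≤ v) (hne : u ≠ v) :
    ∀ a ∈ R, connIn R u a → ¬ v ≤ a := by
  intro a _ hua hva
  have key : ∀ c, connIn R u c → connIn R u (fun i => c i && v i) := by
    intro c hc
    induction hc with
    | refl =>
      have h : (fun i => u i && v i) = u := by
        funext i
        have : u i ≤ v i := huv i
        revert this
        cases u i <;> cases v i <;> decide
      rw [h]
      exact Relation.ReflTransGen.refl
    | @tail b c _ hbc ih =>
      obtain ⟨hb, hc, hd⟩ := hbc
      have hle : hammingDist (fun i => b i && v i) (fun i => c i && v i) ≤ 1 := by
        rw [← hd]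
        exact hammingDist_comp_le_hammingDist (fun i (x : Bool) => x && v i)
      rcases Nat.le_one_iff_eq_zero_or_eq_one.mp hle with h | h
      · rw [← hammingDist_eq_zero.mp h]
        exact ih
      · exact Relation.ReflTransGen.tail ih ⟨hand b hb v hv, hand c hc v hv, h⟩
  apply hdistinct
  have h : (fun i => a i && v i) = v := by
    funext i
    have : v i ≤ a i := hva i
    revert this
    cases a i <;> cases v i <;> decide
  have := key a hua
  rwa [h] at this
end

section
/- Let R ⊆ {0,1}^n be closed under the coordinatewise application of the ternary operation (x,y,z) ↦ x⊕y⊕z (R is affine). Then for every a ∈ R, the connected component of a in the solution graph G(R) is exactly the subcube {b ∈ {0,1}^n | b_i = a_i for every i ∉ D}, where D = {i | the vector obtained from a by flipping coordinate i belongs to R}. In particular, every connected component of G(R) induces a hypercube and is closed under coordinatewise maj. -/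
theorem flip_mem {n : ℕ} (R : Set (Fin n → Bool))
    (hxor : ∀ a ∈ R, ∀ b ∈ R, ∀ c ∈ R,
      (fun i => xor (xor (a i) (b i)) (c i)) ∈ R)
    (b c : Fin n → Bool) (i : Fin n) (hb : b ∈ R) (hc : c ∈ R)
    (h : Function.update b i (!b i) ∈ R) : Function.update c i (!c i) ∈ R := by
  have := hxor b hb _ h c hc
  convert this using 1
  funext j
  by_cases hj : j = i
  · subst hj; simp
  · simp [hj]

theorem dist_flip {n : ℕ} (b : Fin n → Bool) (i : Fin n) :
    hammingDist b (Function.update b i (!b i)) = 1 := by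
  unfold hammingDist
  rw [Finset.card_eq_one]
  refine ⟨i, ?_⟩
  ext j
  by_cases hj : j = i
  · subst hj; simp
  · simp [hj]

theorem flip_of_dist {n : ℕ} (b c : Fin n → Bool) (h : hammingDist b c = 1) :
    ∃ i, c = Function.update b i (!b i) := by
  unfold hammingDist at h
  rw [Finset.card_eq_one] at h
  obtain ⟨i, hi⟩ := h
  refine ⟨i, ?_⟩
  funext j
  have := Finset.ext_iff.1 hi j
  by_cases hj : j = i
  · subst hj
    simp at this
    simp only [Function.update_self]
    revert this
    cases b j <;> cases c j <;> simp
  · simp [hj] at this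
    simp [hj, this]

theorem comp_iff {n : ℕ} (R : Set (Fin n → Bool))
    (hxor : ∀ a ∈ R, ∀ b ∈ R, ∀ c ∈ R,
      (fun i => xor (xor (a i) (b i)) (c i)) ∈ R)
    (a : Fin n → Bool) (ha : a ∈ R) (b : Fin n → Bool) :
    (b ∈ R ∧ connIn R a b) ↔ ∀ i, Function.update a i (!a i) ∉ R → b i = a i := by
  constructor
  · rintro ⟨-, h⟩
    unfold connIn at h
    induction h with
    | refl => intro i _; rfl
    | tail _ hs ih =>
      obtain ⟨hb, hc, hd⟩ := hs
      obtain ⟨j, rfl⟩ := flip_of_dist _ _ hd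
      intro i hi
      by_cases hij : i = j
      · subst hij
        exact absurd (flip_mem R hxor _ a i hb ha hc) hi
      · simp [hij, ih i hi]
  · have key : ∀ s : Finset (Fin n), ∀ b : Fin n → Bool, (∀ i, i ∉ s → b i = a i) →
        (∀ i, Function.update a i (!a i) ∉ R → b i = a i) → b ∈ R ∧ connIn R a b := by
      intro s
      induction s using Finset.induction_on with
      | empty =>
        intro b h _
        have : b = a := funext fun i => h i (by simp)
        subst this
        exact ⟨ha, Relation.ReflTransGen.refl⟩
      | insert j s _ ih =>
        intro b h h'
        by_cases hj : b j = a j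
        · refine ih b (fun i hi => ?_) h'
          by_cases hij : i = j
          · rw [hij, hj]
          · exact h i (by simp [hij, hi])
        · have hD : Function.update a j (!a j) ∈ R := by
            by_contra hn
            exact hj (h' j hn)
          have hc := ih (Function.update b j (a j)) (fun i hi => by
            by_cases hij : i = j
            · subst hij; simp
            · simpa [hij] using h i (by simp [hij, hi])) (fun i hi => by
            by_cases hij : i = j
            · subst hij; simp
            · simpa [hij] using h' i hi)
          have hb : b = Function.update (Function.update b j (a j)) j
              (!(Function.update b j (a j)) j) := by
            funext i
            by_cases hij : i = j
            · subst hij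
              simp only [Function.update_self]
              revert hj
              cases b i <;> cases a i <;> simp
            · simp [hij]
          have hbR := flip_mem R hxor a _ j ha hc.1 hD
          have hd := dist_flip (Function.update b j (a j)) j
          rw [← hb] at hbR hd
          exact ⟨hbR, Relation.ReflTransGen.tail hc.2 ⟨hc.1, hbR, hd⟩⟩
    intro h
    exact key Finset.univ b (fun i hi => absurd (Finset.mem_univ i) hi) h

/-- For `R` closed under coordinatewise `x ⊕ y ⊕ z` (an affine relation) and
`a ∈ R`, the connected component of `a` in `G(R)` is exactly the subcube of
vectors agreeing with `a` outside `D = {i | a with coordinate i flipped ∈ R}`.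
In particular the component is closed under coordinatewise majority. -/
theorem stmt7 {n : ℕ} (R : Set (Fin n → Bool))
    (hxor : ∀ a ∈ R, ∀ b ∈ R, ∀ c ∈ R,
      (fun i => xor (xor (a i) (b i)) (c i)) ∈ R)
    (a : Fin n → Bool) (ha : a ∈ R) :
    ({b | b ∈ R ∧ connIn R a b} =
        {b | ∀ i, Function.update a i (!a i) ∉ R → b i = a i}) ∧
      (∀ b c d, b ∈ R → c ∈ R → d ∈ R →
        connIn R a b → connIn R a c → connIn R a d →
          (fun i => maj (b i) (c i) (d i)) ∈ R ∧
            connIn R a (fun i => maj (b i) (c i) (d i))) := by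
  have key := comp_iff R hxor a ha
  refine ⟨Set.ext key, ?_⟩
  intro b c d hb hc hd hab hac had
  rw [key]
  intro i hi
  have h1 := (key b).1 ⟨hb, hab⟩ i hi
  have h2 := (key c).1 ⟨hc, hac⟩ i hi
  have h3 := (key d).1 ⟨hd, had⟩ i hi
  simp [maj, h1, h2, h3]
end

section
/- Let f : {0,1}^n → {0,1} be 0-separating: there exists a coordinate i such that every vector a ∈ {0,1}^n with a_i = 1 satisfies f(a) = 1. Then any two solutions a, b ∈ f⁻¹(1) are connected in the solution graph G(f), and d_f(a,b) ≤ |a − b| + 2, where |a − b| is the Hamming distance. -/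
theorem path_trans {ι : Type*} [Fintype ι] [DecidableEq ι] (R : Set (ι → Bool))
    (k l : ℕ) (a b c : ι → Bool) (h1 : hasPathLen R k a b) (h2 : hasPathLen R l b c) :
    hasPathLen R (k + l) a c := by
  induction k generalizing a with
  | zero =>
    have h : a = b := h1
    subst h
    simpa using h2
  | succ k ih =>
    obtain ⟨d, hd, hp⟩ := h1
    rw [Nat.succ_add]
    exact ⟨d, hd, ih d hp⟩

theorem path_conn {ι : Type*} [Fintype ι] [DecidableEq ι] (R : Set (ι → Bool))
    (k : ℕ) (a b : ι → Bool) (h1 : hasPathLen R k a b) : connIn R a b := by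
  induction k generalizing a with
  | zero =>
    have h : a = b := h1
    subst h
    exact Relation.ReflTransGen.refl
  | succ k ih =>
    obtain ⟨d, hd, hp⟩ := h1
    exact Relation.ReflTransGen.head hd (ih d hp)

theorem dist_update {ι : Type*} [Fintype ι] [DecidableEq ι] (a : ι → Bool) (j : ι) (v : Bool)
    (h : a j ≠ v) : hammingDist a (Function.update a j v) = 1 := by
  unfold hammingDist
  rw [Finset.card_eq_one]
  refine ⟨j, ?_⟩
  ext x
  by_cases hx : x = j
  · subst hx; simpa using h
  · simp [hx]

theorem dist_update_right {ι : Type*} [Fintype ι] [DecidableEq ι] (a b : ι → Bool) (j : ι)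
    (h : a j ≠ b j) :
    hammingDist (Function.update a j (b j)) b + 1 = hammingDist a b := by
  unfold hammingDist
  rw [← Finset.card_erase_add_one (s := Finset.univ.filter fun i => a i ≠ b i) (a := j)
    (by simpa using h)]
  congr 2
  ext x
  by_cases hx : x = j
  · subst hx; simp
  · simp [hx]

theorem path_top {ι : Type*} [Fintype ι] [DecidableEq ι] (R : Set (ι → Bool)) (i : ι)
    (hR : ∀ a : ι → Bool, a i = true → a ∈ R) (k : ℕ) (a b : ι → Bool)
    (ha : a i = true) (hb : b i = true) (hk : hammingDist a b = k) : hasPathLen R k a b := by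
  induction k generalizing a with
  | zero => exact hammingDist_eq_zero.mp hk
  | succ k ih =>
    have hne : a ≠ b := by
      rintro rfl
      simp at hk
    obtain ⟨j, hj⟩ := Function.ne_iff.mp hne
    have hc : Function.update a j (b j) i = true := by
      by_cases hx : i = j
      · subst hx; simpa using hb
      · simpa [hx] using ha
    have := dist_update_right a b j hj
    exact ⟨Function.update a j (b j), ⟨hR _ ha, hR _ hc, dist_update a j _ hj⟩,
      ih _ hc (by omega)⟩

theorem path_up {ι : Type*} [Fintype ι] [DecidableEq ι] (R : Set (ι → Bool)) (i : ι)
    (hR : ∀ a : ι → Bool, a i = true → a ∈ R) (a : ι → Bool) (ha : a ∈ R) :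
    ∃ k ≤ 1, hasPathLen R k a (Function.update a i true) ∧
      hasPathLen R k (Function.update a i true) a := by
  by_cases h : a i = true
  · have he : Function.update a i true = a := by rw [← h, Function.update_eq_self]
    exact ⟨0, by omega, he.symm, he⟩
  · have hd := dist_update a i true h
    have hm : Function.update a i true ∈ R := hR _ (by simp)
    exact ⟨1, le_rfl, ⟨_, ⟨ha, hm, hd⟩, rfl⟩, ⟨_, ⟨hm, ha, by rwa [hammingDist_comm]⟩, rfl⟩⟩

/-- For a 0-separating Boolean function `f` (some coordinate `i` is `0` on
every non-solution, i.e. every vector with `i`-th coordinate `1` is a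
solution), any two solutions are connected in the solution graph and their
distance is at most the Hamming distance plus 2. -/
theorem stmt11 {n : ℕ} (f : (Fin n → Bool) → Bool)
    (hsep : ∃ i, ∀ a : Fin n → Bool, a i = true → f a = true)
    (a b : Fin n → Bool) (ha : f a = true) (hb : f b = true) :
    connIn {x | f x = true} a b ∧
      distIn {x | f x = true} a b ≤ hammingDist a b + 2 := by
  obtain ⟨i, hi⟩ := hsep
  obtain ⟨k, hk, hp, -⟩ := path_up {x | f x = true} i hi a ha
  obtain ⟨l, hl, -, hq⟩ := path_up {x | f x = true} i hi b hb
  have hm := path_top {x | f x = true} i hi _ (Function.update a i true)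
    (Function.update b i true) (by simp) (by simp) rfl
  have hle : hammingDist (Function.update a i true) (Function.update b i true)
      ≤ hammingDist a b := by
    unfold hammingDist
    apply Finset.card_le_card
    intro x
    by_cases hx : x = i
    · subst hx; simp
    · simp [hx]
  have hall := path_trans _ _ _ _ _ _ (path_trans _ _ _ _ _ _ hp hm) hq
  refine ⟨path_conn _ _ _ _ hall, ?_⟩
  exact (Nat.sInf_le hall).trans (by omega)
end

section
/- Let s be a subset of the coordinates {1,…,n}, let c ∈ {0,1}, and let f : {0,1}^n → {0,1} be the affine function f(x) = (⊕_{i∈s} x_i) ⊕ c. Then two solutions a, b ∈ f⁻¹(1) are connected in the solution graph G(f) if and only if a_i = b_i for every i ∈ s (they differ only in fictive variables), and in that case d_f(a,b) = |a − b|, the Hamming distance. -/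
theorem aux_one {n : ℕ} {a b : Fin n → Bool} (h : hammingDist a b = 1) :
    ∃ i, a i ≠ b i ∧ ∀ j, j ≠ i → a j = b j := by
  unfold hammingDist at h
  obtain ⟨i, hi⟩ := Finset.card_eq_one.mp h
  have key : ∀ j, a j ≠ b j ↔ j = i := by
    intro j
    have := Finset.ext_iff.mp hi j
    simpa using this
  refine ⟨i, (key i).2 rfl, fun j hj => ?_⟩
  by_contra hne
  exact hj ((key j).1 hne)

theorem aux_card {n : ℕ} (s : Finset (Fin n)) (a : Fin n → Bool) (i : Fin n) (hi : i ∈ s) :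
    (s.filter (fun i => a i = true)).card =
      ((s.erase i).filter (fun i => a i = true)).card + (if a i = true then 1 else 0) := by
  conv_lhs => rw [← Finset.insert_erase hi, Finset.filter_insert]
  split_ifs with h
  · rw [Finset.card_insert_of_notMem (by simp)]
  · rfl

theorem aux_step {n : ℕ} (s : Finset (Fin n)) (c : Bool)
    (f : (Fin n → Bool) → Bool)
    (hf : ∀ a, f a =
      xor (decide ((s.filter (fun i => a i = true)).card % 2 = 1)) c)
    {a b : Fin n → Bool} (h : stepR {x | f x = true} a b) : ∀ i ∈ s, a i = b i := by
  obtain ⟨ha, hb, h1⟩ := h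
  obtain ⟨i, hi, hj⟩ := aux_one h1
  intro j hjs
  by_cases hji : j = i
  · subst hji
    exfalso
    have ha' : f a = true := ha
    have hb' : f b = true := hb
    rw [hf, aux_card s _ j hjs] at ha' hb'
    have he : (s.erase j).filter (fun i => a i = true) =
        (s.erase j).filter (fun i => b i = true) := by
      apply Finset.filter_congr
      intro k hk
      rw [hj k (Finset.ne_of_mem_erase hk)]
    rw [he] at ha'
    generalize ((s.erase j).filter (fun i => b i = true)).card = m at ha' hb'
    have hm : m % 2 = 0 ∨ m % 2 = 1 := by omega
    rcases hm with hm | hm <;> cases hA : a j <;> cases hB : b j <;> cases c <;>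
      simp_all [Nat.add_mod]
  · exact hj j hji

theorem aux_le {n : ℕ} (R : Set (Fin n → Bool)) (b : Fin n → Bool) :
    ∀ (k : ℕ) (a : Fin n → Bool), hasPathLen R k a b → hammingDist a b ≤ k
  | 0, a, h => by
      have h' : a = b := h
      simp [h']
  | k + 1, a, h => by
      obtain ⟨c, hc, hp⟩ := h
      have h1 := aux_le R b k c hp
      have h2 := hammingDist_triangle a c b
      have h3 := hc.2.2
      omega

theorem aux_conn {n : ℕ} (R : Set (Fin n → Bool)) (b : Fin n → Bool) :
    ∀ (k : ℕ) (a : Fin n → Bool), hasPathLen R k a b → connIn R a b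
  | 0, a, h => by
      have h' : a = b := h
      subst h'
      exact Relation.ReflTransGen.refl
  | k + 1, a, h => by
      obtain ⟨c, hc, hp⟩ := h
      exact Relation.ReflTransGen.head hc (aux_conn R b k c hp)

theorem aux_path {n : ℕ} (s : Finset (Fin n)) (R : Set (Fin n → Bool))
    (hR : ∀ x y : Fin n → Bool, (∀ i ∈ s, x i = y i) → x ∈ R → y ∈ R)
    (b : Fin n → Bool) :
    ∀ (k : ℕ) (a : Fin n → Bool), a ∈ R → (∀ i ∈ s, a i = b i) → hammingDist a b = k →
      hasPathLen R k a b
  | 0, a, _, _, hk => hammingDist_eq_zero.mp hk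
  | k + 1, a, ha, hs, hk => by
      have hne : a ≠ b := by
        rintro rfl
        simp at hk
      obtain ⟨i, hi⟩ := Function.ne_iff.mp hne
      have his : i ∉ s := fun h => hi (hs i h)
      have hc : ∀ j ∈ s, a j = Function.update a i (b i) j := by
        intro j hj
        rw [Function.update_of_ne]
        rintro rfl
        exact his hj
      have hcR := hR _ _ hc ha
      have h1 : hammingDist a (Function.update a i (b i)) = 1 := by
        unfold hammingDist
        rw [Finset.card_eq_one]
        refine ⟨i, ?_⟩
        ext j
        by_cases hj : j = i
        · subst hj
          simpa using hi
        · simp [hj]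
      have h2 : hammingDist (Function.update a i (b i)) b = k := by
        have he : (Finset.univ.filter fun j => Function.update a i (b i) j ≠ b j) =
            (Finset.univ.filter fun j => a j ≠ b j).erase i := by
          ext j
          by_cases hj : j = i
          · subst hj
            simp
          · simp [hj]
        unfold hammingDist at hk ⊢
        rw [he, Finset.card_erase_of_mem (by simpa using hi), hk]
        rfl
      exact ⟨_, ⟨ha, hcR, h1⟩,
        aux_path s R hR b k _ hcR (fun j hj => (hc j hj).symm.trans (hs j hj)) h2⟩

/-- For the affine function `f(x) = (⊕_{i ∈ s} x_i) ⊕ c`, two solutions are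
connected in the solution graph iff they agree on all coordinates in `s`
(they differ only in fictive variables), and in that case the shortest-path
distance equals the Hamming distance. -/
theorem stmt12 {n : ℕ} (s : Finset (Fin n)) (c : Bool)
    (f : (Fin n → Bool) → Bool)
    (hf : ∀ a, f a =
      xor (decide ((s.filter (fun i => a i = true)).card % 2 = 1)) c)
    (a b : Fin n → Bool) (ha : f a = true) (hb : f b = true) :
    (connIn {x | f x = true} a b ↔ ∀ i ∈ s, a i = b i) ∧
      ((∀ i ∈ s, a i = b i) →
        distIn {x | f x = true} a b = hammingDist a b) := by
  have hR : ∀ x y : Fin n → Bool, (∀ i ∈ s, x i = y i) →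
      x ∈ {x | f x = true} → y ∈ {x | f x = true} := by
    intro x y hxy hx
    have hx' : f x = true := hx
    change f y = true
    rw [hf] at hx' ⊢
    have he : s.filter (fun i => y i = true) = s.filter (fun i => x i = true) := by
      apply Finset.filter_congr
      intro i hi
      rw [hxy i hi]
    rw [he]
    exact hx'
  have hpath : (∀ i ∈ s, a i = b i) → hasPathLen {x | f x = true} (hammingDist a b) a b :=
    fun h => aux_path s _ hR b _ a ha h rfl
  refine ⟨⟨fun h => ?_, fun h => aux_conn _ b _ a (hpath h)⟩, fun h => ?_⟩
  · clear hb hpath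
    unfold connIn at h
    induction h with
    | refl => exact fun _ _ => rfl
    | tail _ hst ih => exact fun i hi => (ih i hi).trans (aux_step s c f hf hst i hi)
  · exact le_antisymm (Nat.sInf_le (hpath h))
      (le_csInf ⟨_, hpath h⟩ (fun k hk => aux_le _ b k a hk))
end

section
/- Let k ≥ 2, let ψ : {0,1}^n → {0,1}, and define T₀, T : {0,1}^n × {0,1} × {0,1}^{k+1} → {0,1} by: T₀(x,y,z) = 1 iff (ψ(x) = 1 and y = 1 and z = (0,…,0)) or z has at least two coordinates equal to 1; and T(x,y,z) = 1 iff T₀(x,y,z) = 1 or (x = (1,…,1) and y = 1 and z = (1,0,…,0)). Then: (i) T is 0-separating of degree k: for any k vectors outside T⁻¹(1) there is a coordinate at which all k vectors are 0; (ii) for any solutions s, t of ψ, the solutions (s,1,(0,…,0)) and (t,1,(0,…,0)) of T₀ are connected in G(T₀) if and only if s and t are connected in G(ψ); (iii) if ψ(1,…,1) = 1, then G(T) is connected if and only if G(ψ) is connected. -/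
theorem aux_dist_iff {ι : Type*} [Fintype ι] [DecidableEq ι] (a b : ι → Bool) :
    hammingDist a b = 1 ↔ ∃ i, a i ≠ b i ∧ ∀ j, j ≠ i → a j = b j := by
  unfold hammingDist
  rw [Finset.card_eq_one]
  constructor
  · rintro ⟨i, hi⟩
    refine ⟨i, ?_, ?_⟩
    · have : i ∈ ({i} : Finset ι) := Finset.mem_singleton_self i
      rw [← hi] at this
      simpa using this
    · intro j hj
      by_contra h
      have : j ∈ ({i} : Finset ι) := by rw [← hi]; simpa using h
      exact hj (Finset.mem_singleton.1 this)
  · rintro ⟨i, h1, h2⟩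
    refine ⟨i, ?_⟩
    ext j
    simp only [Finset.mem_filter, Finset.mem_univ, true_and, Finset.mem_singleton]
    constructor
    · intro h
      by_contra hj
      exact h (h2 j hj)
    · rintro rfl
      exact h1

theorem aux_symm {ι : Type*} [Fintype ι] [DecidableEq ι] (R : Set (ι → Bool))
    {a b : ι → Bool} (h : connIn R a b) : connIn R b a := by
  have hs : Std.Symm (stepR R) := ⟨fun x y h => ⟨h.2.1, h.1, by rw [hammingDist_comm]; exact h.2.2⟩⟩
  exact (Relation.ReflTransGen.stdSymm (r := stepR R)).symm _ _ h

theorem aux_mono {ι : Type*} [Fintype ι] [DecidableEq ι] {R S : Set (ι → Bool)} (hRS : R ⊆ S)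
    {a b : ι → Bool} (h : connIn R a b) : connIn S a b := by
  induction h with
  | refl => exact Relation.ReflTransGen.refl
  | tail _ h ih => exact Relation.ReflTransGen.tail ih ⟨hRS h.1, hRS h.2.1, h.2.2⟩

theorem aux_map {ι κ : Type*} [Fintype ι] [DecidableEq ι] [Fintype κ] [DecidableEq κ]
    {R : Set (ι → Bool)} {S : Set (κ → Bool)} (P : (ι → Bool) → (κ → Bool))
    (hP : ∀ a b, stepR R a b → connIn S (P a) (P b))
    {a b : ι → Bool} (h : connIn R a b) : connIn S (P a) (P b) := by
  induction h with
  | refl => exact Relation.ReflTransGen.refl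
  | tail _ h2 ih => exact Relation.ReflTransGen.trans ih (hP _ _ h2)

theorem aux_up {ι : Type*} [Fintype ι] [DecidableEq ι] (R : Set (ι → Bool)) :
    ∀ (m : ℕ) (u : ι → Bool), (Finset.univ.filter (fun i => u i = false)).card = m →
      (∀ v : ι → Bool, (∀ i, u i = true → v i = true) → v ∈ R) →
      connIn R u (fun _ => true) := by
  intro m
  induction m with
  | zero =>
    intro u hc _
    have : u = fun _ => true := by
      funext i
      rw [Finset.card_eq_zero] at hc
      by_contra h
      have : i ∈ Finset.univ.filter (fun i => u i = false) := by simpa using h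
      rw [hc] at this
      simp at this
    rw [this]
    exact Relation.ReflTransGen.refl
  | succ m ih =>
    intro u hc hu
    have hne : (Finset.univ.filter (fun i => u i = false)).Nonempty := by
      rw [← Finset.card_pos]; omega
    obtain ⟨i, hi⟩ := hne
    have hi' : u i = false := by simpa using hi
    have hup : ∀ j, u j = true → Function.update u i true j = true := by
      intro j hj
      by_cases h : j = i
      · subst h; simp
      · simp [h, hj]
    refine Relation.ReflTransGen.head (b := Function.update u i true) ⟨hu u (fun _ h => h), hu _ hup, ?_⟩ ?_
    · rw [aux_dist_iff]
      refine ⟨i, by simp [hi'], fun j hj => by simp [hj]⟩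
    · apply ih
      · have : Finset.univ.filter (fun j => Function.update u i true j = false)
            = (Finset.univ.filter (fun j => u j = false)).erase i := by
          ext j
          by_cases h : j = i
          · subst h; simp
          · simp [h]
        rw [this, Finset.card_erase_of_mem hi, hc]
        rfl
      · intro v hv
        exact hu v (fun j hj => hv j (hup j hj))

/-- The transformation used for the clones `S₀₂ᵏ`: with coordinates indexed by
`Fin n ⊕ Unit ⊕ Fin (k+1)` (the `x`-variables, the variable `y`, and the
variables `z`), the relation `T` is 0-separating of degree `k`, `T₀` preserves
connectivity between the embedded solutions of `ψ`, and (when `ψ` is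
1-reproducing) the solution graph of `T` is connected iff that of `ψ` is. -/
theorem stmt14 {n k : ℕ} (hk : 2 ≤ k) (ψ : (Fin n → Bool) → Bool)
    (T₀ T : Set ((Fin n ⊕ Unit ⊕ Fin (k + 1)) → Bool))
    (hT₀ : ∀ v, v ∈ T₀ ↔
      ((ψ (fun i => v (Sum.inl i)) = true ∧ v (Sum.inr (Sum.inl ())) = true ∧
          ∀ j, v (Sum.inr (Sum.inr j)) = false) ∨
        2 ≤ (Finset.univ.filter
          (fun j : Fin (k + 1) => v (Sum.inr (Sum.inr j)) = true)).card))
    (hT : ∀ v, v ∈ T ↔ (v ∈ T₀ ∨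
      ((∀ i, v (Sum.inl i) = true) ∧ v (Sum.inr (Sum.inl ())) = true ∧
        ∀ j : Fin (k + 1), v (Sum.inr (Sum.inr j)) = decide (j = 0)))) :
    (∀ w : Fin k → ((Fin n ⊕ Unit ⊕ Fin (k + 1)) → Bool),
      (∀ t, w t ∉ T) → ∃ i, ∀ t, w t i = false) ∧
    (∀ s t, ψ s = true → ψ t = true →
      (connIn T₀ (Sum.elim s (Sum.elim (fun _ => true) (fun _ => false)))
          (Sum.elim t (Sum.elim (fun _ => true) (fun _ => false))) ↔
        connIn {x | ψ x = true} s t)) ∧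
    (ψ (fun _ => true) = true →
      ((∀ u ∈ T, ∀ w ∈ T, connIn T u w) ↔
        (∀ s, ψ s = true → ∀ t, ψ t = true → connIn {x | ψ x = true} s t))) := by
  have hcard : ∀ v : (Fin n ⊕ Unit ⊕ Fin (k + 1)) → Bool,
      2 ≤ (Finset.univ.filter
          (fun j : Fin (k + 1) => v (Sum.inr (Sum.inr j)) = true)).card ↔
      ∃ a b, v (Sum.inr (Sum.inr a)) = true ∧ v (Sum.inr (Sum.inr b)) = true ∧ a ≠ b := by
    intro v
    rw [Nat.succ_le_iff, Finset.one_lt_card]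
    constructor
    · rintro ⟨a, ha, b, hb, hab⟩
      exact ⟨a, b, by simpa using ha, by simpa using hb, hab⟩
    · rintro ⟨a, b, ha, hb, hab⟩
      exact ⟨a, by simpa using ha, b, by simpa using hb, hab⟩
  simp only [hcard] at hT₀
  have hsub : T₀ ⊆ T := fun v hv => (hT v).2 (Or.inl hv)
  have hlift : ∀ s t, connIn {x | ψ x = true} s t →
      connIn T₀ (Sum.elim s (Sum.elim (fun _ => true) (fun _ => false)))
          (Sum.elim t (Sum.elim (fun _ => true) (fun _ => false))) := by
    intro s t h
    refine aux_map (fun s => Sum.elim s (Sum.elim (fun _ => true) (fun _ => false))) ?_ h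
    rintro a b ⟨ha, hb, hd⟩
    apply Relation.ReflTransGen.single
    refine ⟨(hT₀ _).2 (Or.inl ⟨ha, rfl, fun _ => rfl⟩),
      (hT₀ _).2 (Or.inl ⟨hb, rfl, fun _ => rfl⟩), ?_⟩
    rw [aux_dist_iff] at hd ⊢
    obtain ⟨i, h1, h2⟩ := hd
    refine ⟨Sum.inl i, h1, ?_⟩
    rintro (j | j | j) hj
    · exact h2 j (fun h => hj (by rw [h]))
    · rfl
    · rfl
  classical
  let P : ((Fin n ⊕ Unit ⊕ Fin (k + 1)) → Bool) → (Fin n → Bool) := fun v =>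
    if ∀ j, v (Sum.inr (Sum.inr j)) = false then (fun i => v (Sum.inl i)) else fun _ => true
  have hP0 : ∀ v, (∀ j, v (Sum.inr (Sum.inr j)) = false) → P v = fun i => v (Sum.inl i) :=
    fun v h => if_pos h
  have hP1 : ∀ v, (¬ ∀ j, v (Sum.inr (Sum.inr j)) = false) → P v = fun _ => true :=
    fun v h => if_neg h
  have hz : ∀ v, v ∈ T → (∀ j, v (Sum.inr (Sum.inr j)) = false) →
      ψ (fun i => v (Sum.inl i)) = true := by
    intro v hv h0
    rcases (hT v).1 hv with h | h
    · rcases (hT₀ v).1 h with h | ⟨a, b, h1, h2, h3⟩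
      · exact h.1
      · rw [h0] at h1; simp at h1
    · have := h.2.2 0
      rw [h0] at this; simp at this
  -- steps between zero-weight vectors
  have hzero : ∀ a b, stepR T a b → (∀ j, a (Sum.inr (Sum.inr j)) = false) →
      (∀ j, b (Sum.inr (Sum.inr j)) = false) → connIn {x | ψ x = true} (P a) (P b) := by
    rintro a b ⟨ha, hb, hd⟩ ha0 hb0
    rw [hP0 a ha0, hP0 b hb0]
    rw [aux_dist_iff] at hd
    obtain ⟨i, h1, h2⟩ := hd
    rcases i with i | i
    · apply Relation.ReflTransGen.single
      refine ⟨hz a ha ha0, hz b hb hb0, ?_⟩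
      rw [aux_dist_iff]
      exact ⟨i, h1, fun j hj => h2 _ (fun h => hj (Sum.inl.inj h))⟩
    · have : (fun i => a (Sum.inl i)) = (fun i => b (Sum.inl i)) := by
        funext j
        exact h2 _ (by simp)
      rw [this]
      exact Relation.ReflTransGen.refl
  -- mixed steps
  have hmix : ∀ a b, stepR T a b → (∀ j, a (Sum.inr (Sum.inr j)) = false) →
      (¬ ∀ j, b (Sum.inr (Sum.inr j)) = false) →
      b ∉ T₀ ∧ (fun i => a (Sum.inl i)) = fun _ => true := by
    rintro a b ⟨ha, hb, hd⟩ ha0 hb0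
    rw [aux_dist_iff] at hd
    obtain ⟨i, h1, h2⟩ := hd
    push Not at hb0
    obtain ⟨j, hj⟩ := hb0
    have hi : i = Sum.inr (Sum.inr j) := by
      by_contra h
      exact hj (by rw [← h2 _ (Ne.symm h)]; exact ha0 j)
    subst hi
    have hone : ∀ l, b (Sum.inr (Sum.inr l)) = true → l = j := by
      intro l hl
      by_contra h
      have := h2 (Sum.inr (Sum.inr l)) (by simpa using h)
      rw [ha0, hl] at this
      simp at this
    have hb' : b ∉ T₀ := by
      intro h
      rcases (hT₀ b).1 h with h | ⟨p, q, hp, hq, hpq⟩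
      · exact hj (h.2.2 j)
      · exact hpq ((hone p hp).trans (hone q hq).symm)
    refine ⟨hb', ?_⟩
    rcases (hT b).1 hb with h | h
    · exact absurd h hb'
    · funext l
      rw [h2 _ (by simp)]
      exact h.1 l
  have hPe : ∀ s : Fin n → Bool,
      P (Sum.elim s (Sum.elim (fun _ => true) (fun _ => false))) = s :=
    fun s => hP0 _ (fun _ => rfl)
  have hsymstep : ∀ a b, stepR T a b → stepR T b a := fun a b h =>
    ⟨h.2.1, h.1, by rw [hammingDist_comm]; exact h.2.2⟩
  refine ⟨?_, ?_, ?_⟩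
  · intro w hw
    by_contra hcon
    push Not at hcon
    have h1 : ∀ j : Fin (k + 1), ∃ t, w t (Sum.inr (Sum.inr j)) = true := by
      intro j
      obtain ⟨t, ht⟩ := hcon (Sum.inr (Sum.inr j))
      exact ⟨t, by simpa using ht⟩
    choose f hf using h1
    obtain ⟨a, b, hab, he⟩ := Fintype.exists_ne_map_eq_of_card_lt f (by simp)
    apply hw (f a)
    apply hsub
    rw [hT₀]
    exact Or.inr ⟨a, b, hf a, by rw [he]; exact hf b, hab⟩
  · intro s t hs ht
    refine ⟨fun h => ?_, hlift s t⟩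
    have := aux_map (S := {x | ψ x = true}) P ?_ h
    · rwa [hPe, hPe] at this
    · intro a b hab
      have habT : stepR T a b := ⟨hsub hab.1, hsub hab.2.1, hab.2.2⟩
      by_cases ha : ∀ j, a (Sum.inr (Sum.inr j)) = false <;>
        by_cases hb : ∀ j, b (Sum.inr (Sum.inr j)) = false
      · exact hzero a b habT ha hb
      · exact absurd hab.2.1 (hmix a b habT ha hb).1
      · exact absurd hab.1 (hmix b a (hsymstep _ _ habT) hb ha).1
      · rw [hP1 a ha, hP1 b hb]
        exact Relation.ReflTransGen.refl
  · intro h1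
    constructor
    · intro h s hs t ht
      have h' := h (Sum.elim s (Sum.elim (fun _ => true) (fun _ => false)))
        (hsub ((hT₀ _).2 (Or.inl ⟨hs, rfl, fun _ => rfl⟩)))
        (Sum.elim t (Sum.elim (fun _ => true) (fun _ => false)))
        (hsub ((hT₀ _).2 (Or.inl ⟨ht, rfl, fun _ => rfl⟩)))
      have := aux_map (S := {x | ψ x = true}) P ?_ h'
      · rwa [hPe, hPe] at this
      · intro a b habT
        by_cases ha : ∀ j, a (Sum.inr (Sum.inr j)) = false <;>
          by_cases hb : ∀ j, b (Sum.inr (Sum.inr j)) = false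
        · exact hzero a b habT ha hb
        · rw [hP0 a ha, hP1 b hb, (hmix a b habT ha hb).2]
          exact Relation.ReflTransGen.refl
        · rw [hP0 b hb, hP1 a ha, (hmix b a (hsymstep _ _ habT) hb ha).2]
          exact Relation.ReflTransGen.refl
        · rw [hP1 a ha, hP1 b hb]
          exact Relation.ReflTransGen.refl
    · intro h
      have hspec : ∀ u : (Fin n ⊕ Unit ⊕ Fin (k + 1)) → Bool, ((∀ i, u (Sum.inl i) = true) ∧
          u (Sum.inr (Sum.inl ())) = true ∧
          ∀ j : Fin (k + 1), u (Sum.inr (Sum.inr j)) = decide (j = 0)) →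
          connIn T u (fun _ => true) := by
        rintro u ⟨hx, hy, hzz⟩
        refine aux_up T _ u rfl ?_
        intro v hv
        rw [hT]
        have hv0 := hv (Sum.inr (Sum.inr 0)) (by rw [hzz]; simp)
        by_cases hex : ∃ j, j ≠ 0 ∧ v (Sum.inr (Sum.inr j)) = true
        · obtain ⟨j, hj, hvj⟩ := hex
          exact Or.inl ((hT₀ v).2 (Or.inr ⟨j, 0, hvj, hv0, hj⟩))
        · right
          refine ⟨fun i => hv _ (hx i), hv _ hy, fun j => ?_⟩
          by_cases hj : j = 0
          · subst hj; simpa using hv0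
          · have : ¬ v (Sum.inr (Sum.inr j)) = true := fun hh => hex ⟨j, hj, hh⟩
            simpa [hj] using this
      have htop : ∀ u ∈ T, connIn T u (fun _ => true) := by
        intro u hu
        rcases (hT u).1 hu with hu0 | hu1
        · rcases (hT₀ u).1 hu0 with ⟨hx, hy, hzz⟩ | ⟨a, b, ha, hb, hab⟩
          · have hue : u = Sum.elim (fun i => u (Sum.inl i))
                (Sum.elim (fun _ => true) (fun _ => false)) := by
              funext i
              rcases i with i | i | i
              · rfl
              · exact hy
              · exact hzz i
            have c1 := aux_mono hsub (hlift _ _ (h _ hx _ h1))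
            rw [← hue] at c1
            refine Relation.ReflTransGen.trans c1 ?_
            have hsp := hspec (Sum.elim (fun _ => true)
                (Sum.elim (fun _ => true) (fun j => decide (j = 0))))
                ⟨fun _ => rfl, rfl, fun _ => rfl⟩
            refine Relation.ReflTransGen.head ⟨?_, ?_, ?_⟩ hsp
            · exact hsub ((hT₀ _).2 (Or.inl ⟨h1, rfl, fun _ => rfl⟩))
            · exact (hT _).2 (Or.inr ⟨fun _ => rfl, rfl, fun _ => rfl⟩)
            · rw [aux_dist_iff]
              refine ⟨Sum.inr (Sum.inr 0), by simp, ?_⟩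
              rintro (j | j | j) hj
              · rfl
              · rfl
              · have : j ≠ 0 := fun hh => hj (by rw [hh])
                simp [this]
          · refine aux_up T _ u rfl ?_
            intro v hv
            exact hsub ((hT₀ v).2 (Or.inr ⟨a, b, hv _ ha, hv _ hb, hab⟩))
        · exact hspec u hu1
      intro u hu w hw
      exact Relation.ReflTransGen.trans (htop u hu) (aux_symm T (htop w hw))
end

section
/- Let R ⊆ {0,1}^n be a relation that is not componentwise bijunctive, i.e. some connected component of the solution graph G(R) is not closed under the coordinatewise application of maj. Then there exist a relation Q obtained from R by adding 2-clauses — that is, Q = R ∩ ⋂_{(i,j)∈P} {a ∈ {0,1}^n | (a_i, a_j) ∈ E_{ij}} for some finite set P of pairs of distinct coordinates and three-element sets E_{ij} ⊆ {0,1}² — and vectors a, b ∈ Q such that a and b are connected in G(Q) but d_Q(a,b) > |a − b| (the distance between a and b expands in Q). -/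
section helpers
variable {n : ℕ}

lemma hd_update_target {x y : Fin n → Bool} {j : Fin n} (h : x j ≠ y j) :
    hammingDist (Function.update x j (y j)) y + 1 = hammingDist x y := by
  unfold hammingDist
  rw [← Finset.card_insert_of_notMem (a := j)]
  · congr 1
    ext i
    by_cases hi : i = j
    · subst hi; simp [h]
    · simp [hi]
  · simp

lemma hd_update_both {x y : Fin n → Bool} {j : Fin n} (c : Bool) (h : x j = y j) :
    hammingDist (Function.update x j c) (Function.update y j c) = hammingDist x y := by
  unfold hammingDist
  congr 1
  ext i
  by_cases hi : i = j
  · subst hi; simp [h]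
  · simp [hi]

lemma step_symm {R : Set (Fin n → Bool)} {a b : Fin n → Bool} (h : stepR R a b) :
    stepR R b a := ⟨h.2.1, h.1, by rw [hammingDist_comm]; exact h.2.2⟩

lemma conn_symm {R : Set (Fin n → Bool)} {a b : Fin n → Bool} (h : connIn R a b) :
    connIn R b a := by
  unfold connIn at *
  induction h with
  | refl => exact .refl
  | tail _ h2 ih => exact .head (step_symm h2) ih

lemma conn_mono {R S : Set (Fin n → Bool)} (hRS : R ⊆ S) {a b : Fin n → Bool}
    (h : connIn R a b) : connIn S a b :=
  Relation.ReflTransGen.mono (r := stepR R) (p := stepR S)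
    (fun _ _ h => ⟨hRS h.1, hRS h.2.1, h.2.2⟩) _ _ h

lemma conn_path {R : Set (Fin n → Bool)} {a b : Fin n → Bool} (h : connIn R a b) :
    ∃ k, hasPathLen R k a b := by
  unfold connIn at h
  induction h using Relation.ReflTransGen.head_induction_on with
  | refl => exact ⟨0, rfl⟩
  | head h1 _ ih => obtain ⟨k, hk⟩ := ih; exact ⟨k + 1, _, h1, hk⟩

lemma path_hd {R : Set (Fin n → Bool)} {k : ℕ} {a b : Fin n → Bool}
    (h : hasPathLen R k a b) : hammingDist a b ≤ k := by
  induction k generalizing a with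
  | zero => cases h; simp
  | succ k ih =>
    obtain ⟨c, hc, h⟩ := h
    have h1 := ih h
    have h2 := hammingDist_triangle a c b
    have h3 := hc.2.2
    omega

lemma hd_one {a c : Fin n → Bool} (h : hammingDist a c = 1) :
    ∃ j, a j ≠ c j ∧ c = Function.update a j (c j) := by
  unfold hammingDist at h
  obtain ⟨j, hj⟩ := Finset.card_eq_one.1 h
  have key : ∀ i, a i ≠ c i ↔ i = j := by
    intro i
    have := Finset.ext_iff.1 hj i
    simpa using this
  refine ⟨j, (key j).2 rfl, ?_⟩
  ext i
  by_cases hi : i = j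
  · subst hi; simp
  · have := mt (key i).1 hi
    simp only [not_not] at this
    simp [hi, this]

lemma good_step {R : Set (Fin n → Bool)} {p q : Fin n → Bool} (hc : connIn R p q)
    (hne : p ≠ q) (hd : ¬ hammingDist p q < distIn R p q) :
    ∃ j, p j ≠ q j ∧ stepR R p (Function.update p j (q j)) := by
  have hmem : hasPathLen R (distIn R p q) p q := Nat.sInf_mem (conn_path hc)
  revert hd hmem
  generalize distIn R p q = k
  intro hd hmem
  cases k with
  | zero => exact absurd hmem hne
  | succ k =>
    obtain ⟨c, h1, h2⟩ := hmem
    have h3 := path_hd h2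
    obtain ⟨j, hj, hcj⟩ := hd_one h1.2.2
    have hjq : c j = q j := by
      by_contra hcq
      have hpq : p j = q j := by
        revert hj hcq; cases p j <;> cases c j <;> cases q j <;> simp
      have e := hd_update_target hcq
      have : Function.update c j (q j) = p := by
        rw [hcj, ← hpq]; simp
      rw [this] at e
      omega
    refine ⟨j, hjq ▸ hj, ?_⟩
    rw [← hjq, ← hcj]; exact h1

/-- A bad triple for the set `C`. -/
def BadT (C : Set (Fin n → Bool)) (m x y z : Fin n → Bool) : Prop :=
  m ∉ C ∧ x ∈ C ∧ y ∈ C ∧ z ∈ C ∧ ∀ i, maj (x i) (y i) (z i) = m i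

lemma BadT.rot {C : Set (Fin n → Bool)} {m x y z : Fin n → Bool} (h : BadT C m x y z) :
    BadT C m y z x :=
  ⟨h.1, h.2.2.1, h.2.2.2.1, h.2.1, fun i => by
    rw [← h.2.2.2.2 i]; cases x i <;> cases y i <;> cases z i <;> rfl⟩

lemma min_single {C : Set (Fin n → Bool)}
    (H : ∀ p ∈ C, ∀ q ∈ C, p ≠ q → ∃ j, p j ≠ q j ∧ Function.update p j (q j) ∈ C)
    (α β γ : ℕ) (hα : 0 < α) (hγ : γ < β) {m x y z : Fin n → Bool} (hb : BadT C m x y z)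
    (hmin : ∀ m' x' y' z', BadT C m' x' y' z' →
      α * hammingDist m x + β * hammingDist m y + γ * hammingDist m z ≤
      α * hammingDist m' x' + β * hammingDist m' y' + γ * hammingDist m' z') :
    ∃ j, y = Function.update m j (!m j) := by
  obtain ⟨hm, hx, hy, hz, hmaj⟩ := hb
  have hxy : x ≠ y := by
    rintro rfl
    apply hm
    have : m = x := by
      ext i; rw [← hmaj i]; cases x i <;> cases z i <;> rfl
    rw [this]; exact hx
  obtain ⟨j, hj, hxC⟩ := H x hx y hy hxy
  have hmj := hmaj j
  by_cases hxm : x j = m j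
  · have hyj : y j = !m j := by
      revert hj hxm; cases x j <;> cases y j <;> cases m j <;> simp
    have hzj : z j = m j := by
      revert hmj hj hxm; cases x j <;> cases y j <;> cases z j <;> cases m j <;> simp [maj]
    by_cases hm' : Function.update m j (y j) ∈ C
    · have h1 := hmin m x _ z ⟨hm, hx, hm', hz, fun i => by
        by_cases hi : i = j
        · subst hi; simpa using hmaj i
        · have := hmaj i
          revert this
          simp only [Function.update_of_ne hi]
          cases x i <;> cases y i <;> cases z i <;> cases m i <;> simp [maj] ⟩
      have e1 : m j ≠ y j := hxm ▸ hj
      have e2 := hd_update_target e1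
      have e3 := hd_update_target (x := Function.update m j (y j)) (y := m) (j := j)
        (by simpa using e1.symm)
      simp only [Function.update_idem, Function.update_eq_self, hammingDist_self] at e3
      rw [hammingDist_comm m (Function.update m j (y j)), ← e3, ← e2] at h1
      have e4 : hammingDist (Function.update m j (y j)) y = 0 := by
        by_contra h0
        have : 0 < hammingDist (Function.update m j (y j)) y := Nat.pos_of_ne_zero h0
        nlinarith
      exact ⟨j, by rw [← hyj]; exact (hammingDist_eq_zero.1 e4).symm⟩
    · exfalso
      have h1 := hmin _ _ y z ⟨hm', hxC, hy, hz, fun i => by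
        by_cases hi : i = j
        · subst hi; rw [hyj, hzj]; simp; cases m i <;> rfl
        · simpa [hi] using hmaj i⟩
      rw [hd_update_both _ hxm.symm] at h1
      have e1 : m j ≠ y j := hxm ▸ hj
      have e2 := hd_update_target e1
      have e3 := hd_update_target (x := Function.update m j (y j)) (y := z) (j := j)
        (by simp [hzj, e1.symm])
      simp only [Function.update_idem, hzj, Function.update_eq_self] at e3
      rw [← e3, ← e2] at h1
      nlinarith
  · exfalso
    have hyj : y j = m j := by
      revert hj hxm; cases x j <;> cases y j <;> cases m j <;> simp
    have h1 := hmin m _ y z ⟨hm, hxC, hy, hz, fun i => by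
        by_cases hi : i = j
        · subst hi; simp [hyj]; cases m i <;> cases z i <;> rfl
        · simpa [hi] using hmaj i⟩
    have e2 := hd_update_target hxm
    rw [← hyj, hammingDist_comm, hammingDist_comm x m] at e2
    rw [← e2] at h1
    nlinarith

lemma mono_path {R C : Set (Fin n → Bool)} (hCR : C ⊆ R)
    (H : ∀ p ∈ C, ∀ q ∈ C, p ≠ q → ∃ j, p j ≠ q j ∧ Function.update p j (q j) ∈ C)
    (k : ℕ) (p q : Fin n → Bool) (hp : p ∈ C) (hq : q ∈ C) (hk : hammingDist p q = k) :
    connIn {r | r ∈ R ∧ ∀ i, r i = p i ∨ r i = q i} p q := by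
  induction k generalizing p with
  | zero =>
    have := hammingDist_eq_zero.1 hk
    subst this
    exact .refl
  | succ k ih =>
    have hne : p ≠ q := by rintro rfl; simp at hk
    obtain ⟨j, hj, hC⟩ := H p hp q hq hne
    have e := hd_update_target hj
    have h1 := ih _ hC (by omega)
    have hor : ∀ i, Function.update p j (q j) i = p i ∨ Function.update p j (q j) i = q i := by
      intro i
      by_cases hi : i = j
      · subst hi; simp
      · simp [hi]
    refine Relation.ReflTransGen.head (b := Function.update p j (q j)) ?_ (conn_mono ?_ h1)
    · refine ⟨⟨hCR hp, by simp⟩, ⟨hCR hC, hor⟩, ?_⟩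
      have := hd_update_target (x := p) (y := Function.update p j (q j)) (j := j) (by simpa using hj)
      simp at this
      omega
    · rintro r ⟨hr, hr2⟩
      refine ⟨hr, fun i => ?_⟩
      rcases hr2 i with h | h
      · rw [h]; exact hor i
      · exact .inr h

end helpers

/-- If some connected component of `G(R)` is not closed under coordinatewise
majority (`R` is not componentwise bijunctive), then by adding 2-clauses
(constraints `(a i, a j) ∈ E p` with `E p` a three-element subset of
`{0,1}²`) one obtains a relation `Q` in which some distance expands. -/
theorem stmt15 {n : ℕ} (R : Set (Fin n → Bool))
    (hncb : ∃ a ∈ R, ∃ x ∈ R, ∃ y ∈ R, ∃ z ∈ R,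
      connIn R a x ∧ connIn R a y ∧ connIn R a z ∧
      ¬((fun i => maj (x i) (y i) (z i)) ∈ R ∧
        connIn R a (fun i => maj (x i) (y i) (z i)))) :
    ∃ (P : Finset (Fin n × Fin n)) (E : Fin n × Fin n → Finset (Bool × Bool)),
      (∀ p ∈ P, p.1 ≠ p.2 ∧ (E p).card = 3) ∧
      ∃ a ∈ {v | v ∈ R ∧ ∀ p ∈ P, (v p.1, v p.2) ∈ E p},
        ∃ b ∈ {v | v ∈ R ∧ ∀ p ∈ P, (v p.1, v p.2) ∈ E p},
          connIn {v | v ∈ R ∧ ∀ p ∈ P, (v p.1, v p.2) ∈ E p} a b ∧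
          hammingDist a b <
            distIn {v | v ∈ R ∧ ∀ p ∈ P, (v p.1, v p.2) ∈ E p} a b := by
  by_cases hexp : ∃ p ∈ R, ∃ q ∈ R, connIn R p q ∧ hammingDist p q < distIn R p q
  · refine ⟨∅, fun _ => ∅, by simp, ?_⟩
    simpa using hexp
  push Not at hexp
  obtain ⟨a, ha, x, hx, y, hy, z, hz, hax, hay, haz, hbad⟩ := hncb
  set C : Set (Fin n → Bool) := {v | v ∈ R ∧ connIn R a v} with hC
  have hCR : C ⊆ R := fun v hv => hv.1
  have H : ∀ p ∈ C, ∀ q ∈ C, p ≠ q → ∃ j, p j ≠ q j ∧ Function.update p j (q j) ∈ C := by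
    intro p hp q hq hne
    have hpq : connIn R p q := (conn_symm hp.2).trans hq.2
    obtain ⟨j, hj, hs⟩ := good_step hpq hne (not_lt.2 (hexp p hp.1 q hq.1 hpq))
    exact ⟨j, hj, hs.2.1, hp.2.tail hs⟩
  have hex : ∃ k, ∃ m x y z, BadT C m x y z ∧
      1 * hammingDist m x + 3 * hammingDist m y + 2 * hammingDist m z = k :=
    ⟨_, _, x, y, z, ⟨hbad, ⟨hx, hax⟩, ⟨hy, hay⟩, ⟨hz, haz⟩, fun _ => rfl⟩, rfl⟩
  classical
  obtain ⟨m, x, y, z, hb, hk⟩ := Nat.find_spec hex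
  have hmin : ∀ m' x' y' z', BadT C m' x' y' z' →
      1 * hammingDist m x + 3 * hammingDist m y + 2 * hammingDist m z ≤
      1 * hammingDist m' x' + 3 * hammingDist m' y' + 2 * hammingDist m' z' := by
    intro m' x' y' z' hb'
    rw [hk]
    exact Nat.find_min' hex ⟨m', x', y', z', hb', rfl⟩
  clear hk
  obtain ⟨v, hv⟩ := min_single H 1 3 2 (by omega) (by omega) hb hmin
  obtain ⟨w, hw⟩ := min_single H 3 2 1 (by omega) (by omega) hb.rot (by
    intro m' x' y' z' hb'
    have := hmin _ _ _ _ hb'.rot.rot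
    omega)
  obtain ⟨hm, hx, hy, hz, hmaj⟩ := hb
  have hvw : v ≠ w := by
    rintro rfl
    have := hmaj v
    rw [hv, hw] at this
    simp at this
    revert this; cases x v <;> cases m v <;> simp [maj]
  have yv : y v = !m v := by simp [hv]
  have yw : y w = m w := by simp [hv, hvw.symm]
  have zw : z w = !m w := by simp [hw]
  have zv : z v = m v := by simp [hw, hvw]
  have xv : x v = m v := by
    have := hmaj v
    rw [yv, zv] at this
    revert this; cases x v <;> cases m v <;> simp [maj]
  have xw : x w = m w := by
    have := hmaj w
    rw [yw, zw] at this
    revert this; cases x w <;> cases m w <;> simp [maj]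
  refine ⟨{(v, w)}, fun _ => Finset.univ.erase (!m v, !m w), ?_, ?_⟩
  · intro p hp
    simp only [Finset.mem_singleton] at hp
    subst hp
    exact ⟨hvw, by rw [Finset.card_erase_of_mem (Finset.mem_univ _)]; rfl⟩
  have hQ : {r : Fin n → Bool | r ∈ R ∧ ∀ p ∈ ({(v, w)} : Finset (Fin n × Fin n)),
      (r p.1, r p.2) ∈ Finset.univ.erase (!m v, !m w)} =
      {r | r ∈ R ∧ (r v = m v ∨ r w = m w)} := by
    ext r
    simp only [Set.mem_ofPred_eq, Finset.mem_singleton, forall_eq, Finset.mem_erase,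
      Finset.mem_univ, and_true, ne_eq, Prod.mk.injEq]
    cases r v <;> cases r w <;> cases m v <;> cases m w <;> simp
  rw [hQ]
  have c1 : connIn {r | r ∈ R ∧ (r v = m v ∨ r w = m w)} y x := by
    refine conn_mono ?_ (mono_path hCR H _ y x hy hx rfl)
    rintro r ⟨hr, h⟩
    refine ⟨hr, .inr ?_⟩
    rcases h w with h | h
    · rw [h, yw]
    · rw [h, xw]
  have c2 : connIn {r | r ∈ R ∧ (r v = m v ∨ r w = m w)} z x := by
    refine conn_mono ?_ (mono_path hCR H _ z x hz hx rfl)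
    rintro r ⟨hr, h⟩
    refine ⟨hr, .inl ?_⟩
    rcases h v with h | h
    · rw [h, zv]
    · rw [h, xv]
  have c3 : connIn {r | r ∈ R ∧ (r v = m v ∨ r w = m w)} y z := c1.trans (conn_symm c2)
  refine ⟨y, ⟨hy.1, .inr yw⟩, z, ⟨hz.1, .inl zv⟩, c3, ?_⟩
  by_contra hd
  have hyz : y ≠ z := by
    intro h
    rw [h, zv] at yv
    simp at yv
  obtain ⟨j, hj, hs⟩ := good_step c3 hyz hd
  by_cases hjv : j = v
  · subst hjv
    have : Function.update y j (z j) = m := by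
      rw [zv, hv]; simp
    rw [this] at hs
    exact hm ⟨hs.2.1.1, hy.2.tail ⟨hs.1.1, hs.2.1.1, hs.2.2⟩⟩
  by_cases hjw : j = w
  · subst hjw
    have := hs.2.1.2
    simp [zw, hvw, yv] at this
  · apply hj
    simp [hv, hw, hjv, hjw]
end

section
/- Let R ⊆ {0,1}^n be nonempty, closed under coordinatewise conjunction ∧ (R is Horn), and not 1-valid (the all-one vector is not in R). Then either the all-zero vector belongs to R (so that identifying all variables of R yields the unary relation {0}), or there exists a ∈ {0,1}^n such that {(x,y) ∈ {0,1}² | the vector whose i-th coordinate is y if a_i = 1 and x if a_i = 0 belongs to R} = {(0,1)} (so that the binary relation {01} is obtained from R by identification and permutation of variables). -/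
/-- If `R ⊆ {0,1}^n` is nonempty, Horn (closed under coordinatewise
conjunction) and not 1-valid, then either the all-zero vector is in `R` (so
identifying all variables yields the unary relation `{0}`), or for some
`a ∈ {0,1}^n`, substituting one variable for the coordinates where `a` is `0`
and another for those where `a` is `1` yields the binary relation `{01}`. -/
theorem stmt16 {n : ℕ} (R : Set (Fin n → Bool)) (hne : R.Nonempty)
    (hand : ∀ a ∈ R, ∀ b ∈ R, (fun i => a i && b i) ∈ R)
    (h1 : (fun _ => true) ∉ R) :
    (fun _ => false) ∈ R ∨
      ∃ a : Fin n → Bool, ∀ x y : Bool,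
        ((fun i => if a i then y else x) ∈ R ↔ (x = false ∧ y = true)) := by
  by_cases h0 : (fun _ => false) ∈ R
  · exact Or.inl h0
  right
  obtain ⟨a, ha⟩ := hne
  refine ⟨a, fun x y => ?_⟩
  cases x <;> cases y
  · simpa using h0
  · simpa using ha
  · have h : (fun i => if a i then false else true) ∉ R := by
      intro hb
      apply h0
      have := hand a ha _ hb
      convert this using 2 with i
      cases a i <;> rfl
    simpa using h
  · simpa using h1
end

section
/- Let F ⊆ {0,1}^n be defined by a constraint family ((V_j, Q_j))_{j∈J} in which every constraint relation Q_j is closed under the coordinatewise application of maj (each Q_j is bijunctive). Then for any two distinct connected components A and B of the solution graph G(F), there exists j ∈ J such that the images of A and B under restriction to V_j are disconnected in the solution graph of the projection π_j(F) = {a|_{V_j} : a ∈ F}: no element of {a|_{V_j} : a ∈ A} is connected to an element of {b|_{V_j} : b ∈ B} in G(π_j(F)). -/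
/-- The projection of the defined relation to the scope of the `j`-th
constraint. -/
def projSet {n : ℕ} {J : Type*} (V : J → Finset (Fin n))
    (Q : ∀ j, Set ({i // i ∈ V j} → Bool)) (j : J) :
    Set ({i // i ∈ V j} → Bool) :=
  {x | ∃ c ∈ famSet V Q, x = fun i : {i // i ∈ V j} => c i.1}

theorem aux_baker {ι : Type*} [DecidableEq ι] (R : Set (ι → Bool))
    (hR : ∀ a ∈ R, ∀ b ∈ R, ∀ c ∈ R, (fun i => maj (a i) (b i) (c i)) ∈ R)
    (y0 : ι → Bool) (hy0 : y0 ∈ R) (x : ι → Bool) (s : Finset ι) :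
    (∀ p ∈ s, ∀ q ∈ s, ∃ y ∈ R, y p = x p ∧ y q = x q) → ∃ y ∈ R, ∀ p ∈ s, y p = x p := by
  induction s using Finset.strongInduction with
  | H s ih =>
    intro h
    rcases s.eq_empty_or_nonempty with rfl | ⟨p, hp⟩
    · exact ⟨y0, hy0, by simp⟩
    by_cases hq : ∃ q ∈ s, q ≠ p
    · obtain ⟨q, hq, hqp⟩ := hq
      by_cases hr : ∃ r ∈ s, r ≠ p ∧ r ≠ q
      · obtain ⟨r, hr, hrp, hrq⟩ := hr
        have key : ∀ t ∈ s, ∃ y ∈ R, ∀ u ∈ s, u ≠ t → y u = x u := by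
          intro t ht
          obtain ⟨y, hy, hyx⟩ := ih (s.erase t) (Finset.erase_ssubset ht)
            (fun u hu v hv => h u (Finset.mem_of_mem_erase hu) v (Finset.mem_of_mem_erase hv))
          exact ⟨y, hy, fun u hu hut => hyx u (Finset.mem_erase.2 ⟨hut, hu⟩)⟩
        obtain ⟨y1, h1, k1⟩ := key p hp
        obtain ⟨y2, h2, k2⟩ := key q hq
        obtain ⟨y3, h3, k3⟩ := key r hr
        refine ⟨_, hR y1 h1 y2 h2 y3 h3, ?_⟩
        intro u hu
        have m1 : ∀ c d : Bool, maj d c c = c := by decide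
        have m2 : ∀ c d : Bool, maj c d c = c := by decide
        have m3 : ∀ c d : Bool, maj c c d = c := by decide
        by_cases e1 : u = p
        · have e2 : u ≠ q := fun e => hqp (e ▸ e1)
          have e3 : u ≠ r := fun e => hrp (e ▸ e1)
          simp only [k2 u hu e2, k3 u hu e3, m1]
        · by_cases e2 : u = q
          · have e3 : u ≠ r := fun e => hrq (e ▸ e2)
            simp only [k1 u hu e1, k3 u hu e3, m2]
          · simp only [k1 u hu e1, k2 u hu e2, m3]
      · push Not at hr
        obtain ⟨y, hy, e1, e2⟩ := h p hp q hq
        refine ⟨y, hy, fun u hu => ?_⟩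
        by_cases e : u = p
        · rw [e, e1]
        · rw [hr u hu e, e2]
    · push Not at hq
      obtain ⟨y, hy, e1, e2⟩ := h p hp p hp
      exact ⟨y, hy, fun u hu => by rw [hq u hu, e1]⟩

theorem aux_inv {ι : Type*} [Fintype ι] [DecidableEq ι] (R : Set (ι → Bool)) (i k : ι)
    (hik : i ≠ k) (c d : Bool) (h : ∀ x ∈ R, (x i = c ↔ x k = d)) (x y : ι → Bool)
    (hxy : connIn R x y) : x i = y i := by
  unfold connIn at hxy
  induction hxy with
  | refl => rfl
  | tail hpre hs ih =>
    rename_i u v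
    obtain ⟨hu, hv, hd⟩ := hs
    rw [ih]
    by_contra hne
    have hk : u k ≠ v k := by
      intro e
      have h1 := h u hu
      have h2 := h v hv
      rw [← e, ← h1] at h2
      clear h h1
      revert hne h2
      generalize u i = p
      generalize v i = q
      revert p q c
      decide
    unfold hammingDist at hd
    have := Finset.card_le_one.1 hd.le i (by simpa using hne) k (by simpa using hk)
    exact hik this

theorem aux_main {n : ℕ} {J : Type*}
    (V : J → Finset (Fin n)) (Q : ∀ j, Set ({i // i ∈ V j} → Bool))
    (hQ : ∀ j, ∀ a ∈ Q j, ∀ b ∈ Q j, ∀ c ∈ Q j,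
      (fun i => maj (a i) (b i) (c i)) ∈ Q j)
    (b : Fin n → Bool) (hb : b ∈ famSet V Q) (m : ℕ) :
    ∀ a ∈ famSet V Q, hammingDist a b = m → connIn (famSet V Q) a b ∨
      ∃ j, ∃ i ∈ V j, ∃ k ∈ V j, i ≠ k ∧ a i ≠ b i ∧
        ∀ x ∈ famSet V Q, (x i = b i ↔ x k = b k) := by
  have hF : ∀ a ∈ famSet V Q, ∀ b ∈ famSet V Q, ∀ c ∈ famSet V Q,
      (fun i => maj (a i) (b i) (c i)) ∈ famSet V Q :=
    fun a ha b hb c hc j => hQ j _ (ha j) _ (hb j) _ (hc j)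
  induction m with
  | zero =>
    intro a _ hd
    rw [hammingDist_eq_zero] at hd
    subst hd
    exact Or.inl Relation.ReflTransGen.refl
  | succ m ih =>
    intro a ha hd
    let D : Finset (Fin n) := Finset.univ.filter (fun i => a i ≠ b i)
    have hDc : D.card = m + 1 := hd
    have hDn : D.Nonempty := by rw [← Finset.card_pos]; omega
    let S : Fin n → Set (Fin n → Bool) := fun i => {x | x ∈ famSet V Q ∧ x i = b i}
    obtain ⟨i, hiD, hmax⟩ := Finset.exists_max_image D (fun i => (S i).ncard) hDn
    have hi : a i ≠ b i := by simpa [D] using hiD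
    by_cases hE : ∃ j, i ∈ V j ∧ ∃ k ∈ V j, i ≠ k ∧ a k ≠ b k ∧
        ∀ x ∈ famSet V Q, x i = b i → x k = b k
    · right
      obtain ⟨j, hij, k, hkj, hik, hk, himp⟩ := hE
      refine ⟨j, i, hij, k, hkj, hik, hi, fun x hx => ⟨himp x hx, fun hxk => ?_⟩⟩
      have hsub : S i ⊆ S k := fun x hx => ⟨hx.1, himp x hx.1 hx.2⟩
      have heq : S i = S k := Set.eq_of_subset_of_ncard_le hsub
        (hmax k (by simpa [D] using hk)) (Set.toFinite _)
      have : x ∈ S i := by rw [heq]; exact ⟨hx, hxk⟩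
      exact this.2
    · push Not at hE
      let x := Function.update a i (b i)
      have hxi : x i = b i := by simp [x]
      have hxk : ∀ k, k ≠ i → x k = a k := fun k hk => by simp [x, hk]
      have pair : ∀ j, i ∈ V j → ∀ q ∈ V j, ∃ y ∈ famSet V Q, y i = x i ∧ y q = x q := by
        intro j hij q hq
        by_cases e : q = i
        · exact ⟨b, hb, by rw [hxi], by rw [e, hxi]⟩
        by_cases hab : a q = b q
        · exact ⟨b, hb, by rw [hxi], by rw [hxk q e, hab]⟩
        · obtain ⟨y, hy, h1, h2⟩ := hE j hij q hq (Ne.symm e) hab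
          refine ⟨y, hy, by rw [hxi, h1], ?_⟩
          rw [hxk q e]
          revert hab h2
          generalize y q = u
          generalize a q = v
          generalize b q = w
          revert u v w
          decide
      have hx : x ∈ famSet V Q := by
        intro j
        obtain ⟨y, hy, hyx⟩ := aux_baker (famSet V Q) hF a ha x (V j) (by
          intro p hp q hq
          by_cases e1 : p = i
          · subst e1
            exact pair j hp q hq
          by_cases e2 : q = i
          · subst e2
            obtain ⟨y, hy, h1, h2⟩ := pair j hq p hp
            exact ⟨y, hy, h2, h1⟩
          · exact ⟨a, ha, (hxk p e1).symm, (hxk q e2).symm⟩)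
        have : (fun t : {t // t ∈ V j} => x t.1) = fun t : {t // t ∈ V j} => y t.1 := by
          funext t
          exact (hyx t.1 t.2).symm
        rw [this]
        exact hy j
      have hxb : hammingDist x b = m := by
        have : (Finset.univ.filter (fun k => x k ≠ b k)) = D.erase i := by
          ext k
          by_cases e : k = i
          · subst e
            simp [hxi]
          · simp [D, hxk k e, e]
        unfold hammingDist
        rw [this, Finset.card_erase_of_mem hiD]
        omega
      have hax : hammingDist a x = 1 := by
        have : (Finset.univ.filter (fun k => a k ≠ x k)) = {i} := by
          ext k
          by_cases e : k = i
          · subst e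
            simp [hxi, hi]
          · simp [hxk k e, e]
        unfold hammingDist
        rw [this, Finset.card_singleton]
      rcases ih x hx hxb with h | ⟨j, p, hp, k, hk, hpk, hpb, hall⟩
      · exact Or.inl (Relation.ReflTransGen.head ⟨ha, hx, hax⟩ h)
      · refine Or.inr ⟨j, p, hp, k, hk, hpk, ?_, hall⟩
        have : p ≠ i := fun e => hpb (by rw [e, hxi])
        rwa [hxk p this] at hpb

/-- If every constraint relation is bijunctive (closed under coordinatewise
majority), then for any two distinct connected components `A`, `B` of the
solution graph of the defined relation (given by representatives `a`, `b`),
there is a constraint whose projection disconnects them: no restriction of an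
element of `A` is connected to a restriction of an element of `B` in the
solution graph of the projection. -/
theorem stmt17 {n : ℕ} {J : Type*} [Fintype J]
    (V : J → Finset (Fin n)) (Q : ∀ j, Set ({i // i ∈ V j} → Bool))
    (hQ : ∀ j, ∀ a ∈ Q j, ∀ b ∈ Q j, ∀ c ∈ Q j,
      (fun i => maj (a i) (b i) (c i)) ∈ Q j)
    (a b : Fin n → Bool) (ha : a ∈ famSet V Q) (hb : b ∈ famSet V Q)
    (hdisc : ¬ connIn (famSet V Q) a b) :
    ∃ j, ∀ a' b', a' ∈ famSet V Q → connIn (famSet V Q) a a' →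
      b' ∈ famSet V Q → connIn (famSet V Q) b b' →
      ¬ connIn (projSet V Q j)
          (fun i : {i // i ∈ V j} => a' i.1)
          (fun i : {i // i ∈ V j} => b' i.1) := by
  rcases aux_main V Q hQ b hb _ a ha rfl with h | ⟨j, i, hi, k, hk, hik, hne, hall⟩
  · exact absurd h hdisc
  refine ⟨j, fun a' b' _ haa _ hbb hc => hne ?_⟩
  have e1 := aux_inv (famSet V Q) i k hik _ _ hall _ _ haa
  have e2 := aux_inv (famSet V Q) i k hik _ _ hall _ _ hbb
  have e3 := aux_inv (projSet V Q j) ⟨i, hi⟩ ⟨k, hk⟩ (fun e => hik (congrArg Subtype.val e))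
    (b i) (b k) (by
      rintro x ⟨c, hc, rfl⟩
      exact hall c hc) _ _ hc
  rw [e1, e2]
  exact e3
end

section
/- Let R ⊆ {0,1}^n be a relation that is not safely OR-free: there is an assignment σ mapping each of the n coordinates to one of two variable symbols u, v or to one of the constants 0, 1 such that {(u,v) ∈ {0,1}² | the vector whose i-th coordinate is the value of σ(i) under the assignment (u,v) belongs to R} = {(0,1),(1,0),(1,1)}. Then there exist m ≥ 1 and finitely many maps τ₁, …, τ_r from {1,…,n} to {1,…,m} such that the relation S = {a ∈ {0,1}^m | a ∘ τ_t ∈ R for all t = 1,…,r} (the solution set of a CNF({R})-formula over m variables, without constants) is 1-isolating: S contains an element b ≠ (0,…,0) that is isolated in the solution graph G(S), i.e. no element of S is at Hamming distance 1 from b. -/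
/-- If `R ⊆ {0,1}^n` is not safely OR-free (the binary relation
OR = {01, 10, 11} can be obtained from `R` by identification of variables and
substitution of constants, witnessed by an assignment `σ` sending each
coordinate to one of two variable symbols or a constant), then there is a
CNF({R})-formula without constants — a conjunction of constraints
`R(x_{τ t 1}, …, x_{τ t n})` over `m` variables — whose solution set `S` is
1-isolating: it contains a solution `b ≠ (0,…,0)` isolated in `G(S)`. -/
theorem stmt19 {n : ℕ} (R : Set (Fin n → Bool))
    (hnsof : ∃ σ : Fin n → (Bool × Bool → Bool),
      (∀ i, σ i = Prod.fst ∨ σ i = Prod.snd ∨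
        σ i = (fun _ => false) ∨ σ i = (fun _ => true)) ∧
      (∀ u v : Bool, ((fun i => σ i (u, v)) ∈ R ↔ (u || v) = true))) :
    ∃ (m r : ℕ) (τ : Fin r → (Fin n → Fin m)), 1 ≤ m ∧ 1 ≤ r ∧
      ∃ b ∈ {a : Fin m → Bool | ∀ t, (fun i => a (τ t i)) ∈ R},
        b ≠ (fun _ => false) ∧
        ∀ c ∈ {a : Fin m → Bool | ∀ t, (fun i => a (τ t i)) ∈ R},
          hammingDist b c ≠ 1 := by
  obtain ⟨σ, hσ, hR⟩ := hnsof
  by_cases hup : ∃ s ∈ R, ∃ s', s' ∉ R ∧ ∀ i, s i = true → s' i = true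
  · obtain ⟨s, hs, s', hs', hle⟩ := hup
    have h10 : (fun i => σ i (true, false)) ∈ R := (hR true false).2 rfl
    have h00 : (fun i => σ i (false, false)) ∉ R := fun h => by
      have := (hR false false).1 h
      simp at this
    have key : ∀ i, σ i (false, false) = true → σ i (true, false) = true := by
      intro i
      rcases hσ i with h | h | h | h <;> simp [h]
    have hd : ∀ c : Fin 4 → Bool, hammingDist ![false, false, true, true] c = 1 →
        c = ![true, false, true, true] ∨ c = ![false, true, true, true] ∨
        c = ![false, false, false, true] ∨ c = ![false, false, true, false] := by
      decide
    refine ⟨4, 4, ![fun i => if s i then 2 else if s' i then 0 else 1,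
      fun i => if s i then 2 else if s' i then 1 else 0,
      fun i => if σ i (false, false) then 3 else if σ i (true, false) then 2 else 0,
      fun i => if σ i (false, false) then 2 else if σ i (true, false) then 3 else 0],
      by norm_num, by norm_num, ![false, false, true, true], ?_, ?_, ?_⟩
    · intro t
      fin_cases t
      · convert hs using 2 with i
        cases h : s i <;> cases h' : s' i <;> simp [h, h']
      · convert hs using 2 with i
        cases h : s i <;> cases h' : s' i <;> simp [h, h']
      · convert h10 using 2 with i
        have := key i
        cases h : σ i (false, false) <;> cases h' : σ i (true, false) <;> simp_all
      · convert h10 using 2 with i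
        have := key i
        cases h : σ i (false, false) <;> cases h' : σ i (true, false) <;> simp_all
    · intro h
      have := congrFun h 2
      simp at this
    · intro c hc hdist
      rcases hd c hdist with h | h | h | h
      · apply hs'
        convert hc 0 using 2 with i
        have := hle i
        cases h1 : s i <;> cases h' : s' i <;> simp_all
      · apply hs'
        convert hc 1 using 2 with i
        have := hle i
        cases h1 : s i <;> cases h' : s' i <;> simp_all
      · apply h00
        convert hc 2 using 2 with i
        have := key i
        cases h1 : σ i (false, false) <;> cases h' : σ i (true, false) <;> simp_all
      · apply h00
        convert hc 3 using 2 with i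
        have := key i
        cases h1 : σ i (false, false) <;> cases h' : σ i (true, false) <;> simp_all
  · have h11 : (fun _ => true) ∈ R := by
      by_contra h
      exact hup ⟨_, (hR true true).2 rfl, _, h, fun _ _ => rfl⟩
    have h00 : (fun i => σ i (false, false)) ∉ R := fun h => by
      have := (hR false false).1 h
      simp at this
    have hd : ∀ c : Fin 2 → Bool, hammingDist ![true, true] c = 1 →
        c = ![true, false] ∨ c = ![false, true] := by
      decide
    refine ⟨2, 2, ![fun i => if σ i (false, false) then 0 else 1,
      fun i => if σ i (false, false) then 1 else 0],
      by norm_num, by norm_num, ![true, true], ?_, ?_, ?_⟩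
    · intro t
      convert h11 using 2 with i
      have hj : ∀ j : Fin 2, ![true, true] j = true := by decide
      exact hj _
    · intro h
      have := congrFun h 0
      simp at this
    · intro c hc hdist
      rcases hd c hdist with h | h
      · apply h00
        convert hc 0 using 2 with i
        cases h1 : σ i (false, false) <;> simp_all
      · apply h00
        convert hc 1 using 2 with i
        cases h1 : σ i (false, false) <;> simp_all
end
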